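/- arXiv:2602.13960 — 4 statements merged into one kernel-verified Lean document; each statement's English description precedes it below -/
import Mathlib

section
/- Let Y and Z be ℝ^d-valued random vectors defined on a common probability space with E‖Y − Z‖ < ∞, where Z is Gaussian with mean 0 and symmetric positive definite covariance Σ_Z. Then for every a > 0, every ρ ∈ [0,1), and every ζ ∈ ℝ^d with ‖ζ‖ = 1, writing s := (ζᵀΣ_Zζ)^{1/2}, one has |P(⟨Y, ζ⟩ > a) − P(⟨Z, ζ⟩ > a)| ≤ ((1−ρ)a/s)·φ(ρa/s) + E‖Y − Z‖ / ((1−ρ)a), where φ(x) = (2π)^{−1/2} e^{−x²/2} is the standard normal density. -/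
/-! Write `V = ⟨Z, ζ⟩`, `U = ⟨Y, ζ⟩`, `ε = (1 - ρ) a`. If exactly one of `U`, `V` exceeds `a`, then
either `V` lies in an interval of length `ε` having `a` as an endpoint, or `|U - V| ≥ ε`.
The law of `V` is the centered Gaussian of variance `s²` (`map_inner_eq_gaussianReal`, by uniqueness
of characteristic functions), and both intervals `(ρa, a]` and `(a, a + ε]` lie to the right of
`ρa ≥ 0`, where the density of `V` is at most `φ(ρa/s)/s` (`gaussianReal_real_Ioc_le`). The event
`|U - V| ≥ ε` is contained in `‖Y - Z‖ ≥ ε` because `‖ζ‖ = 1`, and Markov's inequality applies. -/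

open MeasureTheory Matrix
open scoped RealInnerProductSpace NNReal

/-- The standard normal density `φ(x) = (2π)^{-1/2} e^{-x²/2}`. -/
noncomputable def stdNormalPDF (x : ℝ) : ℝ :=
  (Real.sqrt (2 * Real.pi))⁻¹ * Real.exp (-(x ^ 2) / 2)

open ProbabilityTheory in
/-- The centered normal density of variance `v` is nonincreasing on `[0, ∞)`, so to the right of
`b ≥ 0` it is bounded by its value at `b`, which is `φ(b/√v)/√v`. -/
lemma gaussianReal_real_Ioc_le {v : ℝ≥0} (hv : v ≠ 0) {b c e : ℝ} (hb : 0 ≤ b) (hbc : b ≤ c)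
    (hce : c ≤ e) :
    (gaussianReal 0 v).real (Set.Ioc c e) ≤ (e - c) / √(v : ℝ) * stdNormalPDF (b / √(v : ℝ)) := by
  have hv0 : (0 : ℝ) < v := by exact_mod_cast pos_iff_ne_zero.mpr hv
  have hpt : ∀ x ∈ Set.Ioc c e, gaussianPDF 0 v x ≤ ENNReal.ofReal (gaussianPDFReal 0 v b) := by
    intro x hx
    refine ENNReal.ofReal_le_ofReal ?_
    have hbx : b ≤ x := hbc.trans hx.1.le
    unfold gaussianPDFReal
    simp only [sub_zero]
    gcongr
  have heq : gaussianPDFReal 0 v b = (√(v : ℝ))⁻¹ * stdNormalPDF (b / √(v : ℝ)) := by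
    unfold gaussianPDFReal stdNormalPDF
    rw [Real.sqrt_mul (by positivity), mul_inv, div_pow, Real.sq_sqrt hv0.le, sub_zero]
    have : -b ^ 2 / (2 * (v : ℝ)) = -(b ^ 2 / v) / 2 := by field_simp
    rw [this]
    ring
  have hmeas : gaussianReal 0 v (Set.Ioc c e)
      ≤ ENNReal.ofReal (gaussianPDFReal 0 v b * (e - c)) := by
    rw [gaussianReal_apply _ hv, ENNReal.ofReal_mul (gaussianPDFReal_nonneg _ _ _)]
    refine (setLIntegral_mono' measurableSet_Ioc hpt).trans ?_
    simp
  calc (gaussianReal 0 v).real (Set.Ioc c e)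
      ≤ gaussianPDFReal 0 v b * (e - c) := by
        refine ENNReal.toReal_le_of_le_ofReal ?_ hmeas
        exact mul_nonneg (gaussianPDFReal_nonneg _ _ _) (by linarith)
    _ = _ := by rw [heq]; ring

open ProbabilityTheory in
/-- The one-dimensional marginal of `Z` in direction `ζ` is the centered Gaussian of variance
`ζᵀ S ζ`: its characteristic function at `t` is that of `Z` at `t ζ`. -/
lemma map_inner_eq_gaussianReal {d : ℕ} {Ω : Type*} [MeasurableSpace Ω]
    (μ : Measure Ω) [IsProbabilityMeasure μ]
    (Z : Ω → EuclideanSpace ℝ (Fin d)) (hZm : Measurable Z)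
    (S : Matrix (Fin d) (Fin d) ℝ)
    (hZ : ∀ t : EuclideanSpace ℝ (Fin d),
      (∫ ω, Complex.exp (Complex.I * ((⟪t, Z ω⟫ : ℝ) : ℂ)) ∂μ)
        = Complex.exp (-(1/2 : ℂ) * ((⟪t, Matrix.toEuclideanLin S t⟫ : ℝ) : ℂ)))
    (ζ : EuclideanSpace ℝ (Fin d)) {v : ℝ≥0}
    (hv : (v : ℝ) = ⟪ζ, Matrix.toEuclideanLin S ζ⟫) :
    μ.map (fun ω => ⟪Z ω, ζ⟫) = gaussianReal 0 v := by
  have hm : Measurable (fun ω => ⟪Z ω, ζ⟫) := hZm.inner_const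
  have := Measure.isProbabilityMeasure_map (μ := μ) hm.aemeasurable
  refine Measure.ext_of_charFun (funext fun t => ?_)
  rw [charFun_gaussianReal, charFun_apply_real, integral_map hm.aemeasurable (by fun_prop)]
  have h := hZ (t • ζ)
  simp only [map_smul, real_inner_smul_left, real_inner_smul_right, ← hv] at h
  convert h using 2
  · ext ω
    rw [real_inner_comm]
    push_cast
    ring_nf
  · push_cast
    ring

lemma inner_toEuclideanLin_pos {d : ℕ} {S : Matrix (Fin d) (Fin d) ℝ} (hS : S.PosDef)
    {ζ : EuclideanSpace ℝ (Fin d)} (hζ : ζ ≠ 0) : 0 < ⟪ζ, Matrix.toEuclideanLin S ζ⟫ := by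
  have h := hS.dotProduct_mulVec_pos (x := ζ.ofLp) (by simpa using hζ)
  rw [EuclideanSpace.inner_eq_star_dotProduct, dotProduct_comm]
  simpa using h

/-- If `Y` and `Z` live on a common probability space, `E‖Y − Z‖ < ∞`, and
`Z` is centered Gaussian with symmetric positive definite covariance `Σ_Z`, then for all
`a > 0`, `ρ ∈ [0,1)` and unit vectors `ζ`, with `s := (ζᵀ Σ_Z ζ)^{1/2}`,
`|P(⟨Y,ζ⟩ > a) − P(⟨Z,ζ⟩ > a)| ≤ ((1−ρ)a/s)·φ(ρa/s) + E‖Y − Z‖/((1−ρ)a)`. -/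
theorem stmt5 {d : ℕ} {Ω : Type*} [MeasurableSpace Ω]
    (μ : Measure Ω) [IsProbabilityMeasure μ]
    (Y Z : Ω → EuclideanSpace ℝ (Fin d)) (hYm : Measurable Y) (hZm : Measurable Z)
    (SZ : Matrix (Fin d) (Fin d) ℝ) (hSZ : SZ.PosDef)
    (hint : Integrable (fun ω => Y ω - Z ω) μ)
    (hZgauss : ∀ t : EuclideanSpace ℝ (Fin d),
      (∫ ω, Complex.exp (Complex.I * ((⟪t, Z ω⟫ : ℝ) : ℂ)) ∂μ)
        = Complex.exp (-(1/2 : ℂ) * ((⟪t, Matrix.toEuclideanLin SZ t⟫ : ℝ) : ℂ))) :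
    ∀ a : ℝ, 0 < a → ∀ ρ : ℝ, ρ ∈ Set.Ico (0:ℝ) 1 →
      ∀ ζ : EuclideanSpace ℝ (Fin d), ‖ζ‖ = 1 →
      |(μ {ω | a < ⟪Y ω, ζ⟫}).toReal - (μ {ω | a < ⟪Z ω, ζ⟫}).toReal|
        ≤ ((1 - ρ) * a / Real.sqrt ⟪ζ, Matrix.toEuclideanLin SZ ζ⟫)
            * stdNormalPDF (ρ * a / Real.sqrt ⟪ζ, Matrix.toEuclideanLin SZ ζ⟫)
          + (∫ ω, ‖Y ω - Z ω‖ ∂μ) / ((1 - ρ) * a) := by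
  intro a ha ρ hρ ζ hζ
  have hζ0 : ζ ≠ 0 := by
    rintro rfl
    simp at hζ
  have hs := inner_toEuclideanLin_pos hSZ hζ0
  obtain ⟨v, hv⟩ : ∃ v : ℝ≥0, (v : ℝ) = ⟪ζ, Matrix.toEuclideanLin SZ ζ⟫ := ⟨⟨_, hs.le⟩, rfl⟩
  have hv0 : v ≠ 0 := by
    rintro rfl
    simp [← hv] at hs
  have hlaw := map_inner_eq_gaussianReal μ Z hZm SZ hZgauss ζ hv
  rw [← hv]
  have hZζ : Measurable (fun ω => ⟪Z ω, ζ⟫) := hZm.inner_const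
  -- With this `ε`, the interval `(a - ε, a]` is `(ρ a, a]`.
  set ε := (1 - ρ) * a with hε
  have hε0 : 0 < ε := mul_pos (by linarith [hρ.2]) ha
  have hρa : 0 ≤ ρ * a := mul_nonneg hρ.1 ha.le
  have hIoc : ∀ c, ρ * a ≤ c → μ.real {ω | ⟪Z ω, ζ⟫ ∈ Set.Ioc c (c + ε)}
      ≤ ε / √(v : ℝ) * stdNormalPDF (ρ * a / √(v : ℝ)) := by
    intro c hc
    have h := gaussianReal_real_Ioc_le hv0 hρa hc (by linarith : c ≤ c + ε)
    rw [← hlaw, map_measureReal_apply hZζ measurableSet_Ioc, add_sub_cancel_left] at h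
    exact h
  have hMarkov : μ.real {ω | ε ≤ ‖Y ω - Z ω‖} ≤ (∫ ω, ‖Y ω - Z ω‖ ∂μ) / ε := by
    rw [le_div_iff₀' hε0]
    exact mul_meas_ge_le_integral_of_nonneg (ae_of_all _ fun _ => norm_nonneg _) hint.norm ε
  have hdiff : ∀ ω, |⟪Y ω, ζ⟫ - ⟪Z ω, ζ⟫| ≤ ‖Y ω - Z ω‖ := by
    intro ω
    rw [← inner_sub_left]
    simpa [hζ] using abs_real_inner_le_norm (Y ω - Z ω) ζ
  have hcover : ∀ A B C D : Set Ω, A ⊆ B ∪ (C ∪ D) → μ.real A ≤ μ.real B + (μ.real C + μ.real D) :=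
    fun A B C D h => (measureReal_mono h).trans
      ((measureReal_union_le _ _).trans (add_le_add_right (measureReal_union_le _ _) _))
  -- If `U > a ≥ V` and `|U - V| < ε`, then `V > a - ε = ρ a`; note `ρ a + ε = a`.
  have hYZ := hcover {ω | a < ⟪Y ω, ζ⟫} {ω | a < ⟪Z ω, ζ⟫}
    {ω | ⟪Z ω, ζ⟫ ∈ Set.Ioc (ρ * a) (ρ * a + ε)} {ω | ε ≤ ‖Y ω - Z ω‖} (by
      intro ω hω
      simp only [Set.mem_union, Set.mem_ofPred_eq, Set.mem_Ioc] at hω ⊢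
      by_contra! hcon
      obtain ⟨h1, h2, h3⟩ := hcon
      have h4 := (abs_le.mp (hdiff ω)).2
      by_cases h5 : ρ * a < ⟪Z ω, ζ⟫
      · linarith [h2 h5]
      · linarith)
  -- If `V > a ≥ U` and `|U - V| < ε`, then `V < a + ε`.
  have hZY := hcover {ω | a < ⟪Z ω, ζ⟫} {ω | a < ⟪Y ω, ζ⟫}
    {ω | ⟪Z ω, ζ⟫ ∈ Set.Ioc a (a + ε)} {ω | ε ≤ ‖Y ω - Z ω‖} (by
      intro ω hω
      simp only [Set.mem_union, Set.mem_ofPred_eq, Set.mem_Ioc] at hω ⊢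
      by_contra! hcon
      obtain ⟨h1, h2, h3⟩ := hcon
      linarith [(abs_le.mp (hdiff ω)).1, h2 hω])
  have h1 := hIoc (ρ * a) le_rfl
  have h2 := hIoc a (by linarith)
  change |μ.real _ - μ.real _| ≤ _
  rw [abs_le]
  constructor <;> linarith
end

section
/- Let f : ℝ^d → ℝ be differentiable, σ-strongly convex and L-smooth with 0 < σ ≤ L, let x* satisfy ∇f(x*) = 0, and set G_α(y) := y − √α · ∇f(x* + √α · y). Let ξ be an ℝ^d-valued random vector with E[ξ] = 0, m₂ := E‖ξ‖² < ∞, m₃ := E‖ξ‖³ < ∞, and let α ∈ (0, min{1, σ/L²}). Suppose Y is an ℝ^d-valued random vector, independent of ξ, with E‖Y‖³ < ∞, such that G_α(Y) + √α · ξ has the same distribution as Y. Then E‖Y‖² ≤ m₂/σ and E‖Y‖³ ≤ (12 m₂/σ)(1 + m₂/σ) + 12 m₃/σ. -/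
/-!
One step of the chain is `V = G(Y) + √α ξ`, which has the law of `Y`, so the moments of `V` and `Y`
agree. Put `q = 1 - α σ`. Strong convexity gives `⟨∇f(x), x - x*⟩ ≥ σ ‖x - x*‖²` and smoothness
gives `‖∇f(x)‖ ≤ L ‖x - x*‖`, hence `‖G y‖² ≤ (1 - 2 α σ + α² L²) ‖y‖² ≤ q ‖y‖²`
(`norm_sq_step_le`).

For the second moment, expand `‖V‖²`; the cross term has mean zero by independence, so
`E‖Y‖² ≤ q E‖Y‖² + α m₂`. For the third moment, use
`‖a + b‖³ ≤ ‖a‖³ + 3 ‖a‖ ⟨a, b⟩ + 9 (‖a‖ ‖b‖² + ‖b‖³)` (`norm_add_cube_le`) with `a = G(Y)` and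
`b = √α ξ`; again the cross term has mean zero, and `‖G(Y)‖ ≤ 1 + ‖Y‖²`, so
`E‖Y‖³ ≤ q E‖Y‖³ + 9 α (1 + m₂/σ) m₂ + 9 α m₃`. In both cases, solve for the moment of `Y`.
-/

open MeasureTheory
open scoped RealInnerProductSpace NNReal

open ProbabilityTheory

section Deterministic

variable {E : Type*} [NormedAddCommGroup E] [InnerProductSpace ℝ E]

/-- Second-order expansion of the cube of the norm, with an explicit remainder. -/
lemma norm_add_cube_le (a b : E) :
    ‖a + b‖ ^ 3 ≤ ‖a‖ ^ 3 + 3 * (‖a‖ * ⟪a, b⟫) + 9 * (‖a‖ * ‖b‖ ^ 2 + ‖b‖ ^ 3) := by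
  have hN := norm_add_sq_real a b
  have htri := norm_add_le a b
  have hp := abs_le.1 (abs_real_inner_le_norm a b)
  obtain ⟨hp1, hp2⟩ := hp
  have hN0 := norm_nonneg (a + b)
  have hs0 := norm_nonneg a
  have ht0 := norm_nonneg b
  generalize ‖a + b‖ = N at *
  generalize ‖a‖ = s at *
  generalize ‖b‖ = t at *
  generalize ⟪a, b⟫ = p at *
  by_cases hts : s < t
  · -- The remainder dominates: the triangle inequality is enough.
    have h1 : N ^ 3 ≤ (s + t) ^ 3 := by gcongr
    have h2 : s * (-(s * t)) ≤ s * p := by gcongr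
    have h3 : s * (s * t) ≤ t * (s * t) := by gcongr
    have h4 : 0 ≤ t ^ 3 := by positivity
    nlinarith
  · push Not at hts
    rcases hs0.eq_or_lt with h | hs
    · have ht : t = 0 := by linarith
      have hN' : N = 0 := by subst ht; linarith
      subst hN'; subst ht; rw [← h]; norm_num
    · -- By AM-GM `2 s N ≤ N² + s²`, which keeps the first-order term exact.
      have h1 : 2 * s * N ≤ 2 * s ^ 2 + 2 * p + t ^ 2 := by nlinarith [sq_nonneg (N - s)]
      have h2 : N ^ 2 * (2 * s * N) ≤ N ^ 2 * (2 * s ^ 2 + 2 * p + t ^ 2) := by gcongr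
      have h3 : p ^ 2 ≤ (s * t) ^ 2 := sq_le_sq' (by linarith) hp2
      have h4 : p * t ^ 2 ≤ s * t * t ^ 2 := by gcongr
      have h5 : t * t ^ 3 ≤ s * t ^ 3 := by gcongr
      have h6 : 0 ≤ s ^ 2 * t ^ 2 := by positivity
      have h7 : 0 ≤ s * t ^ 3 := by positivity
      have h8 : 2 * s * N ^ 3 ≤
          2 * s * (s ^ 3 + 3 * (s * p) + 9 * (s * t ^ 2 + t ^ 3)) := by
        rw [hN] at h2
        have e : 2 * s * N ^ 3 = N ^ 2 * (2 * s * N) := by ring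
        rw [e, hN]
        nlinarith
      exact le_of_mul_le_mul_left h8 (by positivity)

variable [CompleteSpace E]

lemma inner_gradient_ge {f : E → ℝ} {σ : ℝ} {xstar : E}
    (hsc : ∀ x y, f x + ⟪gradient f x, y - x⟫ + σ / 2 * ‖x - y‖ ^ 2 ≤ f y)
    (hxstar : gradient f xstar = 0) (x : E) :
    σ * ‖x - xstar‖ ^ 2 ≤ ⟪gradient f x, x - xstar⟫ := by
  have h1 := hsc x xstar
  have h2 := hsc xstar x
  rw [hxstar, inner_zero_left, norm_sub_rev] at h2
  rw [← neg_sub x xstar, inner_neg_right] at h1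
  linarith

/-- The gradient is bounded by `L ‖x - x*‖`: a gradient step of length `1 / L` decreases `f` by at
least `‖∇f(x)‖² / (2 L)`, while `f(x) - f(x*) ≤ L/2 ‖x - x*‖²` and `x*` is a minimizer. -/
lemma norm_gradient_sq_le {f : E → ℝ} {σ L : ℝ} {xstar : E} (hσ : 0 < σ) (hL : 0 < L)
    (hsc : ∀ x y, f x + ⟪gradient f x, y - x⟫ + σ / 2 * ‖x - y‖ ^ 2 ≤ f y)
    (hsm : ∀ x y, f y ≤ f x + ⟪gradient f x, y - x⟫ + L / 2 * ‖x - y‖ ^ 2)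
    (hxstar : gradient f xstar = 0) (x : E) :
    ‖gradient f x‖ ^ 2 ≤ L ^ 2 * ‖x - xstar‖ ^ 2 := by
  have h1 := hsm x (x - L⁻¹ • gradient f x)
  have h2 := hsc xstar (x - L⁻¹ • gradient f x)
  have h3 := hsm xstar x
  rw [hxstar, inner_zero_left] at h2 h3
  rw [norm_sub_rev] at h3
  have e1 : x - L⁻¹ • gradient f x - x = -(L⁻¹ • gradient f x) := by abel
  have e2 : x - (x - L⁻¹ • gradient f x) = L⁻¹ • gradient f x := by abel
  rw [e1, e2, inner_neg_right, inner_smul_right, real_inner_self_eq_norm_sq, norm_smul, mul_pow,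
    Real.norm_of_nonneg (by positivity)] at h1
  have h4 : 0 ≤ σ / 2 * ‖xstar - (x - L⁻¹ • gradient f x)‖ ^ 2 := by positivity
  have h5 : L / 2 * (L⁻¹ ^ 2 * ‖gradient f x‖ ^ 2) = L⁻¹ * ‖gradient f x‖ ^ 2 / 2 := by
    field_simp
  have h6 : L⁻¹ * ‖gradient f x‖ ^ 2 ≤ L * ‖x - xstar‖ ^ 2 := by linarith
  calc ‖gradient f x‖ ^ 2 = L * (L⁻¹ * ‖gradient f x‖ ^ 2) := by field_simp
    _ ≤ L * (L * ‖x - xstar‖ ^ 2) := by gcongr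
    _ = _ := by ring

/-- The noise-free update contracts squared norms by the factor `1 - α σ`. -/
lemma norm_sq_step_le {f : E → ℝ} {σ L α : ℝ} {xstar : E} (hσ : 0 < σ) (hL : 0 < L)
    (hsc : ∀ x y, f x + ⟪gradient f x, y - x⟫ + σ / 2 * ‖x - y‖ ^ 2 ≤ f y)
    (hsm : ∀ x y, f y ≤ f x + ⟪gradient f x, y - x⟫ + L / 2 * ‖x - y‖ ^ 2)
    (hxstar : gradient f xstar = 0) (hα : 0 < α) (hαL : α * L ^ 2 ≤ σ) (y : E) :
    ‖y - √α • gradient f (xstar + √α • y)‖ ^ 2 ≤ (1 - α * σ) * ‖y‖ ^ 2 := by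
  have h1 := inner_gradient_ge hsc hxstar (xstar + √α • y)
  have h2 := norm_gradient_sq_le hσ hL hsc hsm hxstar (xstar + √α • y)
  rw [add_sub_cancel_left, norm_smul, mul_pow, Real.norm_of_nonneg (Real.sqrt_nonneg _),
    Real.sq_sqrt hα.le] at h1 h2
  rw [inner_smul_right, real_inner_comm] at h1
  rw [norm_sub_sq_real, inner_smul_right, norm_smul, mul_pow,
    Real.norm_of_nonneg (Real.sqrt_nonneg _), Real.sq_sqrt hα.le]
  have h3 := mul_le_mul_of_nonneg_left h2 hα.le
  have h4 : α * L ^ 2 * (α * ‖y‖ ^ 2) ≤ σ * (α * ‖y‖ ^ 2) := by gcongr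
  nlinarith

end Deterministic

section Stationary

variable {E : Type*} [NormedAddCommGroup E] [InnerProductSpace ℝ E] [CompleteSpace E]
  [MeasurableSpace E] [BorelSpace E] [SecondCountableTopology E]

lemma integrable_integral_inner_eq_zero {Ω : Type*} [MeasurableSpace Ω] {μ : Measure Ω}
    {X ξ : Ω → E} (h : IndepFun X ξ μ) (hX : Integrable X μ) (hξ : Integrable ξ μ)
    (h0 : ∫ ω, ξ ω ∂μ = 0) :
    Integrable (fun ω => ⟪X ω, ξ ω⟫) μ ∧ ∫ ω, ⟪X ω, ξ ω⟫ ∂μ = 0 := by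
  refine ⟨h.integrable_bilin hX hξ (innerSL ℝ), ?_⟩
  refine (h.integral_bilin hX hξ (innerSL ℝ)).trans ?_
  rw [h0, map_zero]

/-- Moment bounds for a stationary solution of `Y ~ g(Y) + √α ξ`, for any measurable map `g` that
contracts squared norms by `1 - α σ`. -/
lemma stationary_moments {Ω : Type*} [MeasurableSpace Ω] {μ : Measure Ω} [IsProbabilityMeasure μ]
    {g : E → E} (hg : Measurable g) {α σ : ℝ} (hα : 0 < α) (hα1 : α ≤ 1) (hσ : 0 < σ)
    (hgle : ∀ y, ‖g y‖ ^ 2 ≤ (1 - α * σ) * ‖y‖ ^ 2)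
    {ξ Y : Ω → E} (hξm : Measurable ξ) (hξint : Integrable ξ μ) (hξmean : ∫ ω, ξ ω ∂μ = 0)
    (hξ2 : Integrable (fun ω => ‖ξ ω‖ ^ 2) μ) (hξ3 : Integrable (fun ω => ‖ξ ω‖ ^ 3) μ)
    (hYm : Measurable Y) (hindep : IndepFun Y ξ μ) (hY3 : Integrable (fun ω => ‖Y ω‖ ^ 3) μ)
    (hstat : μ.map (fun ω => g (Y ω) + √α • ξ ω) = μ.map Y) :
    σ * ∫ ω, ‖Y ω‖ ^ 2 ∂μ ≤ ∫ ω, ‖ξ ω‖ ^ 2 ∂μ ∧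
    σ * ∫ ω, ‖Y ω‖ ^ 3 ∂μ ≤
      9 * ((1 + ∫ ω, ‖Y ω‖ ^ 2 ∂μ) * ∫ ω, ‖ξ ω‖ ^ 2 ∂μ) + 9 * ∫ ω, ‖ξ ω‖ ^ 3 ∂μ := by
  have hασ0 : 0 < α * σ := by positivity
  have hgn (y : E) : ‖g y‖ ≤ ‖y‖ := by
    refine abs_le_of_sq_le_sq' ((hgle y).trans ?_) (norm_nonneg _) |>.2
    nlinarith [sq_nonneg ‖y‖]
  have hg3 (y : E) : ‖g y‖ ^ 3 ≤ (1 - α * σ) * ‖y‖ ^ 3 :=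
    calc ‖g y‖ ^ 3 = ‖g y‖ * ‖g y‖ ^ 2 := by ring
      _ ≤ ‖y‖ * ((1 - α * σ) * ‖y‖ ^ 2) := by gcongr; exacts [hgn y, hgle y]
      _ = _ := by ring
  have hY2 : Integrable (fun ω => ‖Y ω‖ ^ 2) μ := by
    refine ((integrable_const (1 : ℝ)).add hY3).mono' (by fun_prop) (ae_of_all _ fun ω => ?_)
    have := norm_nonneg (Y ω)
    rw [Real.norm_of_nonneg (by positivity)]
    simp only [Pi.add_apply]
    nlinarith [sq_nonneg (‖Y ω‖ - 1), mul_nonneg this (sq_nonneg (‖Y ω‖ - 1))]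
  have hmeasgY : Measurable (fun ω => g (Y ω)) := hg.comp hYm
  have hgY : Integrable (fun ω => g (Y ω)) μ := by
    refine ((integrable_const (1 : ℝ)).add hY2).mono' hmeasgY.aestronglyMeasurable
      (ae_of_all _ fun ω => (hgn _).trans ?_)
    simp only [Pi.add_apply]
    nlinarith [sq_nonneg (‖Y ω‖ - 1)]
  have hggY : Integrable (fun ω => ‖g (Y ω)‖ • g (Y ω)) μ := by
    refine hY2.mono' (by fun_prop) (ae_of_all _ fun ω => ?_)
    rw [norm_smul, norm_norm, ← sq]
    gcongr
    exact hgn _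
  -- Both cross terms are integrable with mean zero.
  obtain ⟨hI1, hE1⟩ : Integrable (fun ω => ⟪g (Y ω), ξ ω⟫) μ ∧ ∫ ω, ⟪g (Y ω), ξ ω⟫ ∂μ = 0 :=
    integrable_integral_inner_eq_zero (hindep.comp hg measurable_id) hgY hξint hξmean
  obtain ⟨hI2, hE2⟩ : Integrable (fun ω => ⟪‖g (Y ω)‖ • g (Y ω), ξ ω⟫) μ ∧
      ∫ ω, ⟪‖g (Y ω)‖ • g (Y ω), ξ ω⟫ ∂μ = 0 :=
    integrable_integral_inner_eq_zero (hindep.comp (hg.norm.smul hg) measurable_id) hggY hξint hξmean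
  have hind2 : IndepFun (fun ω => 1 + ‖Y ω‖ ^ 2) (fun ω => ‖ξ ω‖ ^ 2) μ :=
    hindep.comp (φ := fun y => 1 + ‖y‖ ^ 2) (ψ := fun y => ‖y‖ ^ 2) (by fun_prop) (by fun_prop)
  have hI3 : Integrable (fun ω => (1 + ‖Y ω‖ ^ 2) * ‖ξ ω‖ ^ 2) μ :=
    hind2.integrable_mul ((integrable_const _).add hY2) hξ2
  have hE3 := hind2.integral_fun_mul_eq_mul_integral (by fun_prop) (by fun_prop)
  rw [integral_add (integrable_const _) hY2] at hE3
  simp only [integral_const, probReal_univ, smul_eq_mul, mul_one] at hE3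
  have hid : IdentDistrib (fun ω => g (Y ω) + √α • ξ ω) Y μ μ :=
    ⟨by fun_prop, by fun_prop, hstat⟩
  have hid2 := hid.comp (u := fun y => ‖y‖ ^ 2) (by fun_prop)
  have hid3 := hid.comp (u := fun y => ‖y‖ ^ 3) (by fun_prop)
  have hb (ω : Ω) : ‖√α • ξ ω‖ ^ 2 = α * ‖ξ ω‖ ^ 2 := by
    rw [norm_smul, mul_pow, Real.norm_of_nonneg (Real.sqrt_nonneg _), Real.sq_sqrt hα.le]
  have hb3 (ω : Ω) : ‖√α • ξ ω‖ ^ 3 ≤ α * ‖ξ ω‖ ^ 3 := by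
    have hr : √α ≤ 1 := Real.sqrt_le_one.2 hα1
    have : √α ^ 3 ≤ α := by
      calc √α ^ 3 = √α * √α ^ 2 := by ring
        _ = √α * α := by rw [Real.sq_sqrt hα.le]
        _ ≤ 1 * α := by gcongr
        _ = α := one_mul _
    rw [norm_smul, mul_pow, Real.norm_of_nonneg (Real.sqrt_nonneg _)]
    gcongr
  constructor
  · have key : ∫ ω, ‖Y ω‖ ^ 2 ∂μ ≤
        ∫ ω, ((1 - α * σ) * ‖Y ω‖ ^ 2 + 2 * √α * ⟪g (Y ω), ξ ω⟫ + α * ‖ξ ω‖ ^ 2) ∂μ := by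
      refine hid2.integral_eq.symm.trans_le (integral_mono (hid2.integrable_iff.2 hY2)
        (((hY2.const_mul _).add (hI1.const_mul _)).add (hξ2.const_mul _)) fun ω => ?_)
      have := hgle (Y ω)
      simp only [Function.comp]
      rw [norm_add_sq_real, hb, inner_smul_right]
      linarith
    rw [integral_add (by fun_prop) (by fun_prop), integral_add (by fun_prop) (by fun_prop),
      integral_const_mul, integral_const_mul, integral_const_mul, hE1] at key
    refine le_of_mul_le_mul_left ?_ hα
    linarith
  · have key : ∫ ω, ‖Y ω‖ ^ 3 ∂μ ≤
        ∫ ω, ((1 - α * σ) * ‖Y ω‖ ^ 3 + 3 * √α * ⟪‖g (Y ω)‖ • g (Y ω), ξ ω⟫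
          + 9 * α * ((1 + ‖Y ω‖ ^ 2) * ‖ξ ω‖ ^ 2) + 9 * α * ‖ξ ω‖ ^ 3) ∂μ := by
      refine hid3.integral_eq.symm.trans_le (integral_mono (hid3.integrable_iff.2 hY3)
        ((((hY3.const_mul _).add (hI2.const_mul _)).add (hI3.const_mul _)).add
          (hξ3.const_mul _)) fun ω => ?_)
      have h1 := hg3 (Y ω)
      have h2 := norm_add_cube_le (g (Y ω)) (√α • ξ ω)
      have h3 := hb3 ω
      have h4 : ‖g (Y ω)‖ ≤ 1 + ‖Y ω‖ ^ 2 := by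
        nlinarith [hgn (Y ω), sq_nonneg (‖Y ω‖ - 1)]
      have h5 : ‖g (Y ω)‖ * (α * ‖ξ ω‖ ^ 2) ≤ (1 + ‖Y ω‖ ^ 2) * (α * ‖ξ ω‖ ^ 2) := by gcongr
      rw [hb, inner_smul_right] at h2
      simp only [Function.comp]
      rw [real_inner_smul_left]
      linarith
    rw [integral_add (by fun_prop) (by fun_prop), integral_add (by fun_prop) (by fun_prop),
      integral_add (by fun_prop) (by fun_prop), integral_const_mul, integral_const_mul,
      integral_const_mul, integral_const_mul, hE3, hE2] at key
    refine le_of_mul_le_mul_left ?_ hα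
    linarith

end Stationary

/-- With `f` σ-strongly convex and `L`-smooth, `∇f(x*) = 0`,
`G_α(y) := y − √α ∇f(x* + √α y)`, centered noise `ξ` with finite second and third moments
`m₂, m₃`, and `α ∈ (0, min{1, σ/L²})`: if `Y` is independent of `ξ`, has `E‖Y‖³ < ∞`, and
`G_α(Y) + √α ξ` has the same distribution as `Y`, then `E‖Y‖² ≤ m₂/σ` and
`E‖Y‖³ ≤ (12 m₂/σ)(1 + m₂/σ) + 12 m₃/σ`. -/
theorem stmt10 {d : ℕ} {Ω : Type*} [MeasurableSpace Ω]
    (μ : Measure Ω) [IsProbabilityMeasure μ]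
    (f : EuclideanSpace ℝ (Fin d) → ℝ) (σ L : ℝ)
    (xstar : EuclideanSpace ℝ (Fin d))
    (hσ : 0 < σ) (hσL : σ ≤ L)
    (hdiff : Differentiable ℝ f)
    (hsc : ∀ x y, f x + ⟪gradient f x, y - x⟫ + σ / 2 * ‖x - y‖ ^ 2 ≤ f y)
    (hsm : ∀ x y, f y ≤ f x + ⟪gradient f x, y - x⟫ + L / 2 * ‖x - y‖ ^ 2)
    (hxstar : gradient f xstar = 0)
    (ξ : Ω → EuclideanSpace ℝ (Fin d)) (hξm : Measurable ξ)
    (hξint : Integrable ξ μ) (hξmean : (∫ ω, ξ ω ∂μ) = 0)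
    (m₂ m₃ : ℝ)
    (hm₂int : Integrable (fun ω => ‖ξ ω‖ ^ 2) μ) (hm₂ : m₂ = ∫ ω, ‖ξ ω‖ ^ 2 ∂μ)
    (hm₃int : Integrable (fun ω => ‖ξ ω‖ ^ 3) μ) (hm₃ : m₃ = ∫ ω, ‖ξ ω‖ ^ 3 ∂μ)
    (α : ℝ) (hα : α ∈ Set.Ioo (0:ℝ) (min 1 (σ / L ^ 2)))
    (Y : Ω → EuclideanSpace ℝ (Fin d)) (hYm : Measurable Y)
    (hindep : ProbabilityTheory.IndepFun Y ξ μ)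
    (hY3 : Integrable (fun ω => ‖Y ω‖ ^ 3) μ)
    (hstat : Measure.map (fun ω =>
        (Y ω - Real.sqrt α • gradient f (xstar + Real.sqrt α • Y ω))
          + Real.sqrt α • ξ ω) μ = Measure.map Y μ) :
    (∫ ω, ‖Y ω‖ ^ 2 ∂μ) ≤ m₂ / σ ∧
    (∫ ω, ‖Y ω‖ ^ 3 ∂μ) ≤ 12 * m₂ / σ * (1 + m₂ / σ) + 12 * m₃ / σ := by
  have hL : 0 < L := hσ.trans_le hσL
  obtain ⟨hα0, hαlt⟩ := hα
  obtain ⟨hα1, hα2⟩ := lt_min_iff.1 hαlt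
  have hαL : α * L ^ 2 ≤ σ := ((lt_div_iff₀ (by positivity)).1 hα2).le
  have hgrad : Measurable (gradient f) :=
    (InnerProductSpace.toDual ℝ _).symm.continuous.measurable.comp (measurable_fderiv ℝ f)
  have hg : Measurable fun y => y - √α • gradient f (xstar + √α • y) := by fun_prop
  obtain ⟨h2, h3⟩ := stationary_moments hg hα0 hα1.le hσ
    (norm_sq_step_le hσ hL hsc hsm hxstar hα0 hαL) hξm hξint hξmean hm₂int hm₃int hYm hindep hY3
    hstat
  rw [← hm₂] at h2 h3
  rw [← hm₃] at h3
  have hm₂0 : 0 ≤ m₂ := hm₂ ▸ integral_nonneg fun ω => by positivity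
  have hm₃0 : 0 ≤ m₃ := hm₃ ▸ integral_nonneg fun ω => by positivity
  have h2' : ∫ ω, ‖Y ω‖ ^ 2 ∂μ ≤ m₂ / σ := by
    rw [le_div_iff₀ hσ]; linarith
  refine ⟨h2', ?_⟩
  have h4 : (1 + ∫ ω, ‖Y ω‖ ^ 2 ∂μ) * m₂ ≤ (1 + m₂ / σ) * m₂ := by gcongr
  have h5 : 0 ≤ (1 + m₂ / σ) * m₂ := by positivity
  have e : 12 * m₂ / σ * (1 + m₂ / σ) + 12 * m₃ / σ
      = (12 * ((1 + m₂ / σ) * m₂) + 12 * m₃) / σ := by ring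
  rw [e, le_div_iff₀ hσ]
  linarith
end

section
/- Let B ∈ ℝ^{d×d} and let P ∈ ℝ^{d×d} be symmetric positive definite with BᵀP + PB = −I. Define the weighted norm ‖u‖_P := (uᵀPu)^{1/2}, and set c := 1/(2λ_max(P)) and κ := ‖P^{1/2} B P^{−1/2}‖_op. Then for every α ∈ (0, min{1, c/(2κ²)}] and every u ∈ ℝ^d, ‖(I + αB)u‖_P² ≤ (1 − (c/2)α)‖u‖_P². -/
/-!
Since `BᵀP + PB = -I`, expanding the square gives
`‖(I + αB)u‖_P² = ‖u‖_P² - α|u|² + α²‖Bu‖_P²`.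
The bound `P ⪯ λ_max I` gives `|u|² ≥ 2c‖u‖_P²`, and `weighted_mulVec_le` gives
`‖Bu‖_P² ≤ κ²‖u‖_P²`. As `ακ² ≤ c/2`, the right-hand side is at most
`(1 - 2cα + cα/2)‖u‖_P² ≤ (1 - cα/2)‖u‖_P²`.
-/

open MeasureTheory Matrix
open scoped RealInnerProductSpace NNReal

/-- The operator norm of a matrix, induced by the Euclidean norm. -/
noncomputable def l2OpNorm {d : ℕ} (A : Matrix (Fin d) (Fin d) ℝ) : ℝ :=
  ‖LinearMap.toContinuousLinearMap (Matrix.toEuclideanLin A)‖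

lemma mulVec_dotProduct_self_le {d : ℕ} (A : Matrix (Fin d) (Fin d) ℝ) (v : Fin d → ℝ) :
    (A *ᵥ v) ⬝ᵥ (A *ᵥ v) ≤ l2OpNorm A ^ 2 * (v ⬝ᵥ v) := by
  have h := (LinearMap.toContinuousLinearMap (Matrix.toEuclideanLin A)).le_opNorm (WithLp.toLp 2 v)
  have hsq : ∀ w : Fin d → ℝ, ‖WithLp.toLp 2 w‖ ^ 2 = w ⬝ᵥ w := fun w => by
    rw [EuclideanSpace.real_norm_sq_eq]
    simp [dotProduct, pow_two]
  have h2 := pow_le_pow_left₀ (norm_nonneg _) h 2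
  rw [mul_pow] at h2
  rw [← hsq (A *ᵥ v), ← hsq v]
  exact h2

/-- The quadratic form of `S²`, for symmetric `S`, is the squared Euclidean norm of `Su`. -/
lemma dotProduct_sq_mulVec {d : ℕ} {S : Matrix (Fin d) (Fin d) ℝ} (hS : S.PosSemidef)
    (u : Fin d → ℝ) : u ⬝ᵥ ((S * S) *ᵥ u) = (S *ᵥ u) ⬝ᵥ (S *ᵥ u) := by
  have hT : Sᵀ = S := by simpa using hS.isHermitian.eq
  rw [← mulVec_mulVec, dotProduct_mulVec, ← mulVec_transpose, hT]

/-- The map `B` has `P`-weighted operator norm at most `‖P^{1/2} B P^{-1/2}‖_op`: apply the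
Euclidean bound to `v = P^{-1/2} P u`, which satisfies `P^{-1/2} v = u` and `|v|² = ‖u‖_P²`. -/
lemma weighted_mulVec_le {d : ℕ} {B P Sq Sqinv : Matrix (Fin d) (Fin d) ℝ} (hP : P.PosDef)
    (hSq : Sq.PosSemidef ∧ Sq * Sq = P) (hSqinv : Sqinv.PosSemidef ∧ Sqinv * Sqinv = P⁻¹)
    (u : Fin d → ℝ) :
    (B *ᵥ u) ⬝ᵥ (P *ᵥ (B *ᵥ u)) ≤ l2OpNorm (Sq * B * Sqinv) ^ 2 * (u ⬝ᵥ (P *ᵥ u)) := by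
  have hdet : IsUnit P.det := hP.det_pos.ne'.isUnit
  have hinv : P⁻¹ *ᵥ (P *ᵥ u) = u := by
    rw [mulVec_mulVec, nonsing_inv_mul _ hdet, one_mulVec]
  have h := mulVec_dotProduct_self_le (Sq * B * Sqinv) (Sqinv *ᵥ (P *ᵥ u))
  rw [← dotProduct_sq_mulVec hSqinv.1, hSqinv.2, hinv, mulVec_mulVec, Matrix.mul_assoc _ Sqinv,
    hSqinv.2, ← mulVec_mulVec, hinv, ← mulVec_mulVec, ← dotProduct_sq_mulVec hSq.1, hSq.2,
    dotProduct_comm (P *ᵥ u)] at h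
  exact h

/-- Let `P ≻ 0` solve `BᵀP + PB = −I`, let `λ_max(P)` be its largest
eigenvalue (characterized as the least `t` with `tI − P ⪰ 0`), `c := 1/(2λ_max(P))`, and
`κ := ‖P^{1/2} B P^{−1/2}‖_op` (with `P^{±1/2}` the psd square roots of `P`, `P⁻¹`). Then for
every `α ∈ (0, min{1, c/(2κ²)}]` and `u`, `‖(I + αB)u‖_P² ≤ (1 − (c/2)α)‖u‖_P²`. -/
theorem stmt11 {d : ℕ} (B P Sq Sqinv : Matrix (Fin d) (Fin d) ℝ) (lamMax c κ : ℝ)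
    (hP : P.PosDef)
    (hLyap : Bᵀ * P + P * B = -1)
    (hlamMax : IsLeast {t : ℝ | (t • (1 : Matrix (Fin d) (Fin d) ℝ) - P).PosSemidef} lamMax)
    (hc : c = 1 / (2 * lamMax))
    (hSq : Sq.PosSemidef ∧ Sq * Sq = P)
    (hSqinv : Sqinv.PosSemidef ∧ Sqinv * Sqinv = P⁻¹)
    (hκ : κ = l2OpNorm (Sq * B * Sqinv)) :
    ∀ α ∈ Set.Ioc (0:ℝ) (min 1 (c / (2 * κ ^ 2))), ∀ u : Fin d → ℝ,
      ((1 + α • B) *ᵥ u) ⬝ᵥ (P *ᵥ ((1 + α • B) *ᵥ u))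
        ≤ (1 - c / 2 * α) * (u ⬝ᵥ (P *ᵥ u)) := by
  rintro α ⟨hα, hαle⟩ u
  have hακ : α ≤ c / (2 * κ ^ 2) := hαle.trans (min_le_right _ _)
  rcases eq_or_ne u 0 with rfl | hu
  · simp
  have hPu : 0 < u ⬝ᵥ (P *ᵥ u) := by simpa using hP.dotProduct_mulVec_pos hu
  have hlam : u ⬝ᵥ (P *ᵥ u) ≤ lamMax * (u ⬝ᵥ u) := by
    have h := hlamMax.1.dotProduct_mulVec_nonneg u
    simp only [star_trivial, sub_mulVec, smul_mulVec, one_mulVec, dotProduct_sub,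
      dotProduct_smul, smul_eq_mul] at h
    linarith
  have huu : 0 ≤ u ⬝ᵥ u := by simpa using dotProduct_star_self_nonneg u
  have hlam0 : 0 < lamMax := by
    by_contra! h
    nlinarith
  have hc0 : 0 < c := by rw [hc]; positivity
  -- When `κ = 0`, Lean's `c / 0 = 0` contradicts `0 < α`.
  have hκ0 : κ ≠ 0 := by
    rintro h
    simp [h] at hακ
    linarith
  have hκα : α * κ ^ 2 ≤ c / 2 := by
    rw [le_div_iff₀ (by positivity)] at hακ
    linarith
  have hB := weighted_mulVec_le (B := B) hP hSq hSqinv u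
  rw [← hκ] at hB
  have hcu : 2 * c * (u ⬝ᵥ (P *ᵥ u)) ≤ u ⬝ᵥ u := by
    have h2c : 2 * c = 1 / lamMax := by rw [hc]; field_simp
    rw [h2c, one_div, inv_mul_le_iff₀ hlam0]
    exact hlam
  have hL : (B *ᵥ u) ⬝ᵥ (P *ᵥ u) + u ⬝ᵥ (P *ᵥ (B *ᵥ u)) = -(u ⬝ᵥ u) := by
    have h := congrArg (fun M => u ⬝ᵥ (M *ᵥ u)) hLyap
    simp only [add_mulVec, dotProduct_add, neg_mulVec, one_mulVec, dotProduct_neg,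
      ← mulVec_mulVec] at h
    rw [dotProduct_mulVec u Bᵀ, vecMul_transpose] at h
    exact h
  have hexp : ((1 + α • B) *ᵥ u) ⬝ᵥ (P *ᵥ ((1 + α • B) *ᵥ u)) =
      u ⬝ᵥ (P *ᵥ u) - α * (u ⬝ᵥ u) + α ^ 2 * ((B *ᵥ u) ⬝ᵥ (P *ᵥ (B *ᵥ u))) := by
    simp only [add_mulVec, one_mulVec, smul_mulVec, mulVec_add, mulVec_smul, dotProduct_add,
      add_dotProduct, smul_dotProduct, dotProduct_smul, smul_eq_mul]
    linear_combination α * hL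
  rw [hexp]
  have h1 := mul_le_mul_of_nonneg_left hcu hα.le
  have h2 := mul_le_mul_of_nonneg_left hB (sq_nonneg α)
  have h3 := mul_le_mul_of_nonneg_right hκα (mul_pos hα hPu).le
  have h4 := mul_pos (mul_pos hc0 hα) hPu
  linarith
end

section
/- Fix d ≥ 1. Let F : ℝ^d → ℝ^d be twice continuously differentiable with a unique root x* (F(x*) = 0), globally L-Lipschitz, with every second partial derivative of every component bounded in absolute value by M < ∞, and with Hurwitz Jacobian J* := DF(x*). Let ν be a probability law on ℝ^d with mean 0, symmetric positive definite covariance Σ, and ∫‖ξ‖³ dν(ξ) < ∞. Let Σ_Y be the unique symmetric positive definite solution of J*Σ_Y + Σ_Y(J*)ᵀ = −Σ, and let γ be the centered Gaussian law on ℝ^d with covariance Σ_Y. Suppose there exist α₀ ∈ (0,1] and A < ∞ such that for every α ∈ (0,α₀) there is a probability measure μ_α on ℝ^d invariant for the stochastic approximation update with stepsize α (meaning: if X ∼ μ_α and ξ ∼ ν are independent, then X + α(F(X) + ξ) ∼ μ_α), and the law π_α of (X − x*)/√α under μ_α satisfies ∫‖y‖³ dπ_α(y) ≤ A. Then there exist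 α₁ ∈ (0,1] and a finite constant U such that for every α ∈ (0,α₁) and every 1-Lipschitz function h : ℝ^d → ℝ, |∫ h dπ_α − ∫ h dγ| ≤ U · √α · log(1/α). -/
open MeasureTheory Matrix
open scoped RealInnerProductSpace NNReal

/-!
The Lyapunov equation makes `γ = N(0, Σ_Y)` exactly invariant under the linear Gaussian chain
`y ↦ B y + η`, where `B = 1 + αJ` and `η ∼ N(0, αΣ - α² J Σ_Y Jᵀ)` (`lyapunov_step`). After
rescaling, `π_α` is invariant under `y ↦ B y + r(y) + √α ξ`, whose noise has covariance `αΣ` and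
whose nonlinear part satisfies `‖r(y)‖ ≤ C α^{3/2} ‖y‖²` (`drift_taylor`, `map_scaled`). The two
chains are compared by Lindeberg replacement.

Let `g_k` be the `k`-step average of a 1-Lipschitz `h` along the linear chain (`chainAvg`), so
`g_0 = h`. Then `∫ h dπ_α - ∫ h dγ` is the sum of `∫ (g_k - g_{k+1}) dπ_α` over `k ≤ n` and of
`∫ g_{n+1} dπ_α - ∫ h dγ`. Since `g_{k+1}(y)` is the average of `g_k (B y + η)`, and `π_α` is
invariant, the `k`-th term measures the effect on `g_k` of one noise replacement and of the shift
`r(y)` (`step_compare`).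

* The shift costs `O(α^{3/2})`, because `g_k` is Lipschitz uniformly in `k`.
* For `k ≥ 1`, `g_k` is `h` averaged over a Gaussian law whose covariance is at least a multiple of
  `min(αk, 1)`. By the Cameron–Martin formula it has a second order expansion with remainder
  `O(‖u‖³ (1 + 1/(αk)))` (`exists_expansion`). The two noises have the same mean, covariances that
  differ by `O(α²)`, and third moments `O(α^{3/2})`, so the replacement costs
  `O(α^{3/2} (1 + 1/(αk)))` (`lindeberg`, `step_pos`).
* For `k = 0` the crude bound `O(√α)` by first moments suffices (`step_zero`).

The linear chain contracts like `(1 - cα)^{k/2}` (`exists_linear_constants`), so for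
`n ≈ log(1/α) / (cα)` the last term is `O(√α)`. Summing the other errors gives
`O(α^{3/2} · (n + α⁻¹ log n)) = O(√α log(1/α))` (`sum_step_le`, `invariant_law_bound`).
-/

namespace StochApprox

set_option linter.unusedSectionVars false

set_option maxSynthPendingDepth 3

open ProbabilityTheory

/-! ### Gaussian smoothing of Lipschitz functions -/

section Smoothing

variable {E : Type*} [NormedAddCommGroup E] [InnerProductSpace ℝ E] [FiniteDimensional ℝ E]
  [MeasurableSpace E] [BorelSpace E]

lemma abs_exp_sub_quadratic_le (s : ℝ) :
    |Real.exp s - (1 + s + s ^ 2 / 2)| ≤ |s| ^ 3 * Real.exp |s| := by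
  have h := Complex.norm_exp_sub_sum_le_norm_mul_exp (s : ℂ) 3
  have e : Complex.exp (s : ℂ) - ∑ m ∈ Finset.range 3, (s : ℂ) ^ m / (m.factorial : ℂ)
      = ((Real.exp s - (1 + s + s ^ 2 / 2) : ℝ) : ℂ) := by
    simp [Finset.sum_range_succ, Nat.factorial]
  rw [e, Complex.norm_real, Complex.norm_real] at h
  simpa using h

variable (E) in
/-- Density of the standard Gaussian law with respect to Lebesgue measure. -/
noncomputable def gaussDensity (x : E) : ℝ :=
  ((2 * Real.pi) ^ ((Module.finrank ℝ E : ℝ) / 2))⁻¹ * Real.exp (-(1 / 2) * ‖x‖ ^ 2)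

lemma gaussDensity_nonneg (x : E) : 0 ≤ gaussDensity E x := by
  unfold gaussDensity; positivity

lemma continuous_gaussDensity : Continuous (gaussDensity E) := by
  unfold gaussDensity; fun_prop

lemma integrable_gaussDensity : Integrable (gaussDensity E) := by
  unfold gaussDensity
  refine Integrable.const_mul ?_ _
  have h := GaussianFourier.integrable_cexp_neg_mul_sq_norm_add (V := E) (b := (1 / 2 : ℂ))
    (by norm_num) 0 0
  have h2 := h.re
  refine h2.congr (Filter.Eventually.of_forall fun x => ?_)
  have : (-(1 / 2 : ℂ) * (‖x‖ : ℂ) ^ 2 + 0 * ((⟪(0 : E), x⟫ : ℝ) : ℂ))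
      = ((-(1 / 2) * ‖x‖ ^ 2 : ℝ) : ℂ) := by push_cast; ring
  simp only [this]
  exact Complex.exp_ofReal_re _

lemma stdGaussian_eq_withDensity :
    stdGaussian E = volume.withDensity (fun x => ENNReal.ofReal (gaussDensity E x)) := by
  have : IsFiniteMeasure (volume.withDensity (fun x => ENNReal.ofReal (gaussDensity E x))) :=
    isFiniteMeasure_withDensity_ofReal integrable_gaussDensity.2
  apply Measure.ext_of_charFun
  ext t
  rw [charFun_stdGaussian, charFun_apply, integral_withDensity_eq_integral_toReal_smul
    (by have := continuous_gaussDensity (E := E); fun_prop) (by simp)]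
  have h := GaussianFourier.integral_cexp_neg_mul_sq_norm_add (V := E) (b := (1 / 2 : ℂ))
    (by norm_num) Complex.I t
  have e : ∀ x : E, (ENNReal.ofReal (gaussDensity E x)).toReal • Complex.exp (⟪x, t⟫ * Complex.I)
      = (((2 * Real.pi) ^ ((Module.finrank ℝ E : ℝ) / 2) : ℝ) : ℂ)⁻¹ *
        Complex.exp (-(1 / 2 : ℂ) * (‖x‖ : ℂ) ^ 2 + Complex.I * ((⟪t, x⟫ : ℝ) : ℂ)) := by
    intro x
    rw [ENNReal.toReal_ofReal (gaussDensity_nonneg x), gaussDensity, Complex.exp_add,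
      real_inner_comm, Complex.real_smul]
    push_cast
    ring_nf
  simp_rw [e]
  rw [integral_const_mul, h]
  have hp : ((Real.pi : ℂ) / (1 / 2)) ^ ((Module.finrank ℝ E : ℂ) / 2)
      = (((2 * Real.pi) ^ ((Module.finrank ℝ E : ℝ) / 2) : ℝ) : ℂ) := by
    rw [Complex.ofReal_cpow (by positivity)]
    push_cast
    congr 1
    ring
  rw [hp, ← mul_assoc, inv_mul_cancel₀, one_mul]
  · congr 1
    rw [Complex.I_sq]; ring
  · have : (0:ℝ) < (2 * Real.pi) ^ ((Module.finrank ℝ E : ℝ) / 2) := by positivity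
    exact_mod_cast this.ne'

lemma integral_stdGaussian (f : E → ℝ) :
    ∫ x, f x ∂(stdGaussian E) = ∫ x, gaussDensity E x * f x := by
  rw [stdGaussian_eq_withDensity, integral_withDensity_eq_integral_toReal_smul
    (by have := continuous_gaussDensity (E := E); fun_prop) (by simp)]
  refine integral_congr_ae (Filter.Eventually.of_forall fun x => ?_)
  simp only [ENNReal.toReal_ofReal (gaussDensity_nonneg x), smul_eq_mul]

/-- Cameron–Martin formula for the standard Gaussian law. -/
lemma cameronMartin (f : E → ℝ) (v : E) :
    ∫ x, f (x + v) ∂(stdGaussian E)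
      = ∫ x, f x * Real.exp (⟪v, x⟫ - ‖v‖ ^ 2 / 2) ∂(stdGaussian E) := by
  rw [integral_stdGaussian, integral_stdGaussian,
    ← integral_add_right_eq_self (fun x => gaussDensity E x *
      (f x * Real.exp (⟪v, x⟫ - ‖v‖ ^ 2 / 2))) v]
  refine integral_congr_ae (Filter.Eventually.of_forall fun x => ?_)
  have e : gaussDensity E (x + v) * Real.exp (⟪v, x + v⟫ - ‖v‖ ^ 2 / 2) = gaussDensity E x := by
    rw [gaussDensity, gaussDensity, mul_assoc, ← Real.exp_add, norm_add_sq_real, inner_add_right,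
      real_inner_self_eq_norm_sq, real_inner_comm]
    ring_nf
  simp only
  rw [← e]; ring

lemma integrable_exp_norm_stdGaussian (c : ℝ) :
    Integrable (fun x => Real.exp (c * ‖x‖)) (stdGaussian E) := by
  obtain ⟨K, hK, hint⟩ := IsGaussian.exists_integrable_exp_sq (stdGaussian E)
  refine (hint.const_mul (Real.exp (c ^ 2 / (4 * K)))).mono'
    (by fun_prop) (Filter.Eventually.of_forall fun x => ?_)
  rw [Real.norm_eq_abs, Real.abs_exp, ← Real.exp_add]
  refine Real.exp_le_exp.2 ?_
  have : c ^ 2 / (4 * K) + K * ‖x‖ ^ 2 - c * ‖x‖ = K * (‖x‖ - c / (2 * K)) ^ 2 := by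
    field_simp; ring
  nlinarith [mul_nonneg hK.le (sq_nonneg (‖x‖ - c / (2 * K)))]

/-- The constant in the smoothing estimate, an exponential moment of the standard Gaussian. -/
noncomputable def smoothConst (E : Type*) [NormedAddCommGroup E] [InnerProductSpace ℝ E]
    [FiniteDimensional ℝ E] [MeasurableSpace E] : ℝ :=
  ∫ z, 4 * (1 + ‖z‖) ^ 4 * Real.exp (1 + ‖z‖) ∂(stdGaussian E)

lemma integrable_smoothConst :
    Integrable (fun z => 4 * (1 + ‖z‖) ^ 4 * Real.exp (1 + ‖z‖)) (stdGaussian E) := by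
  refine ((integrable_exp_norm_stdGaussian (E := E) 2).const_mul
    (4 * 24 * Real.exp 2)).mono' (by fun_prop) (Filter.Eventually.of_forall fun z => ?_)
  have hz := norm_nonneg z
  have h := Real.pow_div_factorial_le_exp (1 + ‖z‖) (by positivity) 4
  have h' : (1 + ‖z‖) ^ 4 ≤ 24 * Real.exp (1 + ‖z‖) := by
    have : ((Nat.factorial 4 : ℕ) : ℝ) = 24 := by norm_num [Nat.factorial]
    rw [this] at h; linarith
  rw [Real.norm_eq_abs, abs_of_nonneg (by positivity)]
  have e : Real.exp 2 * Real.exp (2 * ‖z‖) = Real.exp (1 + ‖z‖) * Real.exp (1 + ‖z‖) := by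
    rw [← Real.exp_add, ← Real.exp_add]; ring_nf
  calc 4 * (1 + ‖z‖) ^ 4 * Real.exp (1 + ‖z‖)
      ≤ 4 * (24 * Real.exp (1 + ‖z‖)) * Real.exp (1 + ‖z‖) := by gcongr
    _ = 4 * 24 * Real.exp 2 * Real.exp (2 * ‖z‖) := by rw [mul_assoc _ (Real.exp 2), e]; ring

lemma le_smoothConst {H : E → ℝ} {b : ℝ}
    (hH : ∀ z, |H z| ≤ b * (4 * (1 + ‖z‖) ^ 4 * Real.exp (1 + ‖z‖))) :
    |∫ z, H z ∂(stdGaussian E)| ≤ b * smoothConst E := by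
  rw [smoothConst, ← integral_const_mul, ← Real.norm_eq_abs]
  exact norm_integral_le_of_norm_le (integrable_smoothConst.const_mul b)
    (Filter.Eventually.of_forall hH)

lemma integrable_of_le_smooth {F : Type*} [NormedAddCommGroup F] {H : E → F}
    (hm : AEStronglyMeasurable H (stdGaussian E)) {b : ℝ}
    (hH : ∀ z, ‖H z‖ ≤ b * (4 * (1 + ‖z‖) ^ 4 * Real.exp (1 + ‖z‖))) :
    Integrable H (stdGaussian E) :=
  (integrable_smoothConst.const_mul b).mono' hm (Filter.Eventually.of_forall hH)

lemma smoothConst_nonneg : 0 ≤ smoothConst E :=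
  integral_nonneg fun z => by positivity

/-- Third order expansion of the likelihood ratio in the Cameron–Martin formula. -/
lemma expansion_small (w z : E) (hw : ‖w‖ ≤ 1) :
    |Real.exp (⟪w, z⟫ - ‖w‖ ^ 2 / 2) - (1 + ⟪w, z⟫ + (⟪w, z⟫ ^ 2 - ‖w‖ ^ 2) / 2)|
      ≤ ‖w‖ ^ 3 * (2 * (1 + ‖z‖) ^ 3 * Real.exp (1 + ‖z‖)) := by
  set t := ⟪w, z⟫ with ht
  set r := ‖w‖ with hr
  set a := 1 + ‖z‖ with ha
  have hr0 : 0 ≤ r := norm_nonneg _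
  have hz0 : 0 ≤ ‖z‖ := norm_nonneg _
  have ha1 : 1 ≤ a := by linarith
  have htr : |t| ≤ r * ‖z‖ := abs_real_inner_le_norm w z
  set s := t - r ^ 2 / 2 with hs
  have hsa : |s| ≤ r * a := by
    have h1 : |s| ≤ |t| + r ^ 2 / 2 := by
      rw [hs]; refine (abs_sub _ _).trans ?_
      rw [abs_of_nonneg (by positivity : 0 ≤ r ^ 2 / 2)]
    nlinarith
  have hsa' : |s| ≤ a := hsa.trans (by nlinarith)
  have h1 := abs_exp_sub_quadratic_le s
  have h2 : |s| ^ 3 * Real.exp |s| ≤ (r * a) ^ 3 * Real.exp a := by gcongr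
  have h3 : |(1 + s + s ^ 2 / 2) - (1 + t + (t ^ 2 - r ^ 2) / 2)| ≤ r ^ 3 * a := by
    have e : (1 + s + s ^ 2 / 2) - (1 + t + (t ^ 2 - r ^ 2) / 2) = r ^ 4 / 8 - t * r ^ 2 / 2 := by
      rw [hs]; ring
    rw [e]
    refine (abs_sub _ _).trans ?_
    rw [abs_of_nonneg (by positivity : 0 ≤ r ^ 4 / 8), abs_div, abs_mul, abs_two,
      abs_of_nonneg (by positivity : 0 ≤ r ^ 2)]
    have h4 : r ^ 4 ≤ r ^ 3 := by nlinarith [pow_nonneg hr0 3]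
    have h5 : |t| * r ^ 2 ≤ r ^ 3 * ‖z‖ := by nlinarith [pow_nonneg hr0 2]
    have : r ^ 3 * a = r ^ 3 + r ^ 3 * ‖z‖ := by rw [ha]; ring
    have h6 : 0 ≤ r ^ 3 := by positivity
    have h7 : 0 ≤ r ^ 3 * ‖z‖ := by positivity
    linarith
  have h4 : r ^ 3 * a ≤ (r * a) ^ 3 * Real.exp a := by
    rw [mul_pow, mul_assoc]
    have : a ≤ a ^ 3 := le_self_pow₀ ha1 (by norm_num)
    have h' : a ^ 3 * 1 ≤ a ^ 3 * Real.exp a := by gcongr; exact Real.one_le_exp (by linarith)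
    gcongr; linarith
  have := abs_sub_le (Real.exp s) (1 + s + s ^ 2 / 2) (1 + t + (t ^ 2 - r ^ 2) / 2)
  calc _ ≤ (r * a) ^ 3 * Real.exp a + (r * a) ^ 3 * Real.exp a := by linarith
    _ = _ := by ring

lemma integral_sub_sub_sub {X : Type*} [MeasurableSpace X] {μ : Measure X} {a b c e : X → ℝ}
    (ha : Integrable a μ) (hb : Integrable b μ) (hc : Integrable c μ) (he : Integrable e μ) :
    ∫ x, (a x - b x - c x - e x) ∂μ
      = ∫ x, a x ∂μ - ∫ x, b x ∂μ - ∫ x, c x ∂μ - ∫ x, e x ∂μ := by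
  have h1 : Integrable (fun x => a x - b x) μ := ha.sub hb
  have h2 : Integrable (fun x => a x - b x - c x) μ := h1.sub hc
  rw [integral_sub h2 he, integral_sub h1 hc, integral_sub ha hb]

variable (E) in
/-- The real inner product as a continuous bilinear form. -/
noncomputable def innerCLM : E →L[ℝ] E →L[ℝ] ℝ :=
  (innerₗ E).mkContinuous₂ 1 fun x y => by simpa using norm_inner_le_norm (𝕜 := ℝ) x y

lemma innerCLM_apply (x y : E) : innerCLM E x y = ⟪x, y⟫ := rfl

lemma norm_innerCLM_le : ‖innerCLM E‖ ≤ 1 :=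
  LinearMap.mkContinuous₂_norm_le _ zero_le_one _

set_option maxHeartbeats 1000000 in
/-- Gaussian smoothing at scale `σ` turns a 1-Lipschitz function into one with a second order
expansion whose quadratic part is `O(1/σ)` and whose remainder is `O(‖u‖ ^ 3 / σ ^ 2)`, uniformly
in the function and the base point. -/
lemma exists_expansion (h : E → ℝ) (hh : LipschitzWith 1 h) {σ : ℝ} (hσ : 0 < σ) (x : E) :
    ∃ (ℓ : E →L[ℝ] ℝ) (q : E →L[ℝ] E →L[ℝ] ℝ),
      (∀ u, |∫ z, h (x + u + σ • z) ∂(stdGaussian E) - ∫ z, h (x + σ • z) ∂(stdGaussian E)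
          - ℓ u - q u u| ≤ smoothConst E * ‖u‖ ^ 3 / σ ^ 2) ∧
      ∀ u w, |q u w| ≤ smoothConst E / σ * ‖u‖ * ‖w‖ := by
  set H : E → ℝ := fun z => h (x + σ • z) - h x with hH
  have hHc : Continuous H := by have := hh.continuous; fun_prop
  have hHb : ∀ z, |H z| ≤ σ * ‖z‖ := by
    intro z
    have := hh.dist_le_mul (x + σ • z) x
    rw [Real.dist_eq, dist_eq_norm] at this
    simpa [norm_smul, abs_of_pos hσ] using this
  -- the weight `(1 + ‖z‖) ^ 4 * exp (1 + ‖z‖)` of `smoothConst` dominates every integrand below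
  have hwt : ∀ z : E, ‖z‖ * (1 + ‖z‖) ^ 3 * Real.exp (1 + ‖z‖)
      ≤ (1 + ‖z‖) ^ 4 * Real.exp (1 + ‖z‖) := by
    intro z
    have hz := norm_nonneg z
    have : ‖z‖ * (1 + ‖z‖) ^ 3 ≤ (1 + ‖z‖) ^ 4 := by
      nlinarith [pow_nonneg (by positivity : 0 ≤ 1 + ‖z‖) 3]
    gcongr
  have hone : ∀ z : E, 1 ≤ Real.exp (1 + ‖z‖) := fun z =>
    Real.one_le_exp (by positivity)
  have hL : ∀ z : E, ‖(H z / σ) • innerSL ℝ z‖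
      ≤ 1 * (4 * (1 + ‖z‖) ^ 4 * Real.exp (1 + ‖z‖)) := by
    intro z
    have hz := norm_nonneg z
    rw [norm_smul, innerSL_apply_norm, Real.norm_eq_abs, abs_div, abs_of_pos hσ]
    have h1 : |H z| / σ ≤ ‖z‖ := by rw [div_le_iff₀ hσ]; linarith [hHb z]
    calc |H z| / σ * ‖z‖ ≤ ‖z‖ * ‖z‖ := by gcongr
      _ ≤ 1 * (4 * (1 + ‖z‖) ^ 4 * 1) := by
        have : 0 ≤ ‖z‖ ^ 3 := by positivity
        have : 0 ≤ ‖z‖ ^ 4 := by positivity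
        nlinarith
      _ ≤ _ := by gcongr; exact hone z
  have hLi : Integrable (fun z => (H z / σ) • innerSL ℝ z) (stdGaussian E) :=
    integrable_of_le_smooth (Continuous.aestronglyMeasurable (by fun_prop)) hL
  have hQ : ∀ z : E, ‖(H z / (2 * σ ^ 2)) •
      ((innerSL ℝ z).smulRight (innerSL ℝ z) - innerCLM E)‖
      ≤ 1 / σ * (4 * (1 + ‖z‖) ^ 4 * Real.exp (1 + ‖z‖)) := by
    intro z
    have hz := norm_nonneg z
    rw [norm_smul, Real.norm_eq_abs, abs_div, abs_of_pos (by positivity : 0 < 2 * σ ^ 2)]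
    have h1 : |H z| / (2 * σ ^ 2) ≤ ‖z‖ / σ := by
      rw [div_le_div_iff₀ (by positivity) hσ]
      have := hHb z
      nlinarith [mul_le_mul_of_nonneg_right this hσ.le, mul_nonneg hz (sq_nonneg σ)]
    have h2 : ‖(innerSL ℝ z).smulRight (innerSL ℝ z) - innerCLM E‖
        ≤ ‖z‖ ^ 2 + 1 := by
      refine (norm_sub_le _ _).trans ?_
      gcongr
      · rw [ContinuousLinearMap.norm_smulRight_apply, innerSL_apply_norm]; exact (sq _).ge
      · exact norm_innerCLM_le
    calc |H z| / (2 * σ ^ 2) * _ ≤ ‖z‖ / σ * (‖z‖ ^ 2 + 1) := by gcongr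
      _ = 1 / σ * (‖z‖ ^ 3 + ‖z‖) := by ring
      _ ≤ 1 / σ * (4 * (1 + ‖z‖) ^ 4 * 1) := by
        gcongr
        have : 0 ≤ ‖z‖ ^ 2 := by positivity
        have : 0 ≤ ‖z‖ ^ 3 := by positivity
        have : 0 ≤ ‖z‖ ^ 4 := by positivity
        nlinarith
      _ ≤ _ := by gcongr; exact hone z
  have hQi : Integrable (fun z => (H z / (2 * σ ^ 2)) •
      ((innerSL ℝ z).smulRight (innerSL ℝ z) - innerCLM E))
      (stdGaussian E) := by
    refine integrable_of_le_smooth (Continuous.aestronglyMeasurable ?_) hQ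
    have : Continuous fun z : E => (innerSL ℝ z).smulRight (innerSL ℝ z) := by
      refine continuous_clm_apply.2 fun y => continuous_clm_apply.2 fun w => ?_
      simp only [ContinuousLinearMap.smulRight_apply, _root_.smul_apply,
        innerSL_apply_apply]
      fun_prop
    fun_prop
  -- the two candidates are the first two Taylor terms at `u = 0` of the likelihood ratio of the
  -- shift by `u / σ`, integrated against the increment `H` of `h`
  refine ⟨∫ z, (H z / σ) • innerSL ℝ z ∂(stdGaussian E), ∫ z, (H z / (2 * σ ^ 2)) •
      ((innerSL ℝ z).smulRight (innerSL ℝ z) - innerCLM E)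
      ∂(stdGaussian E), ?_, ?_⟩
  swap
  · intro u w
    have hn : ‖∫ z, (H z / (2 * σ ^ 2)) •
        ((innerSL ℝ z).smulRight (innerSL ℝ z) - innerCLM E)
        ∂(stdGaussian E)‖ ≤ smoothConst E / σ := by
      have := norm_integral_le_of_norm_le ((integrable_smoothConst (E := E)).const_mul (1 / σ))
        (Filter.Eventually.of_forall hQ)
      rw [integral_const_mul] at this
      refine this.trans (le_of_eq ?_)
      rw [smoothConst]; ring
    rw [← Real.norm_eq_abs]
    refine (ContinuousLinearMap.le_opNorm₂ _ u w).trans ?_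
    gcongr
  intro u
  have hLu := ContinuousLinearMap.integral_apply hLi u
  have hQu := ContinuousLinearMap.integral_apply hQi u
  have hQuu := ContinuousLinearMap.integral_apply (hQi.apply_continuousLinearMap u) u
  rw [hLu, hQu, hQuu]
  set w : E := σ⁻¹ • u with hw
  have huw : u = σ • w := by rw [hw, smul_smul, mul_inv_cancel₀ hσ.ne', one_smul]
  have hnw : ‖u‖ = σ * ‖w‖ := by rw [huw, norm_smul, Real.norm_eq_abs, abs_of_pos hσ]
  have hlip : LipschitzWith 1 h := hh
  have hnormint : Integrable (fun z : E => ‖z‖) (stdGaussian E) :=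
    (IsGaussian.integrable_id (μ := stdGaussian E)).norm
  have hHi : Integrable H (stdGaussian E) :=
    (hnormint.const_mul σ).mono' hHc.aestronglyMeasurable (Filter.Eventually.of_forall hHb)
  have hHwb : ∀ z, |H (z + w)| ≤ σ * (‖z‖ + ‖w‖) := fun z =>
    (hHb _).trans (by gcongr; exact norm_add_le _ _)
  have hHwi : Integrable (fun z => H (z + w)) (stdGaussian E) := by
    refine ((hnormint.add (integrable_const ‖w‖)).const_mul σ).mono' ?_
      (Filter.Eventually.of_forall hHwb)
    exact (by fun_prop : Continuous fun z => H (z + w)).aestronglyMeasurable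
  have e1 : ∫ z, h (x + u + σ • z) ∂(stdGaussian E)
      = ∫ z, H (z + w) ∂(stdGaussian E) + h x := by
    have : ∀ z, h (x + u + σ • z) = H (z + w) + h x := by
      intro z; simp only [hH, huw, smul_add]; rw [sub_add_cancel]; congr 1; abel
    simp_rw [this]
    rw [integral_add hHwi (integrable_const _)]; simp
  have e2 : ∫ z, h (x + σ • z) ∂(stdGaussian E) = ∫ z, H z ∂(stdGaussian E) + h x := by
    have : ∀ z, h (x + σ • z) = H z + h x := by intro z; simp [hH]
    simp_rw [this]
    rw [integral_add hHi (integrable_const _)]; simp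
  have hLui := hLi.apply_continuousLinearMap u
  have hQui := (hQi.apply_continuousLinearMap u).apply_continuousLinearMap u
  have e3 : ∀ z : E, ((H z / σ) • innerSL ℝ z) u = H z * ⟪w, z⟫ := by
    intro z
    simp only [_root_.smul_apply, innerSL_apply_apply, huw, inner_smul_right,
      smul_eq_mul]
    rw [real_inner_comm]; field_simp
  have e4 : ∀ z : E, ((H z / (2 * σ ^ 2)) •
      ((innerSL ℝ z).smulRight (innerSL ℝ z) - innerCLM E)) u u
      = H z * ((⟪w, z⟫ ^ 2 - ‖w‖ ^ 2) / 2) := by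
    intro z
    simp only [_root_.smul_apply, _root_.sub_apply, innerCLM_apply,
      ContinuousLinearMap.smulRight_apply, innerSL_apply_apply, huw, inner_smul_right,
      inner_smul_left, smul_eq_mul, real_inner_self_eq_norm_sq]
    rw [real_inner_comm]; simp; field_simp
  have hLui' : Integrable (fun z => H z * ⟪w, z⟫) (stdGaussian E) := by
    refine hLui.congr (Filter.Eventually.of_forall e3)
  have hQui' : Integrable (fun z => H z * ((⟪w, z⟫ ^ 2 - ‖w‖ ^ 2) / 2)) (stdGaussian E) := by
    refine hQui.congr (Filter.Eventually.of_forall e4)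
  simp_rw [e3, e4]
  rw [e1, e2]
  have hgoal : ∀ I : ℝ, |I| ≤ σ * ‖w‖ ^ 3 * smoothConst E →
      |I| ≤ smoothConst E * ‖u‖ ^ 3 / σ ^ 2 := by
    intro I hI
    refine hI.trans (le_of_eq ?_)
    rw [hnw]; field_simp
  apply hgoal
  -- for `‖w‖ ≤ 1` the likelihood ratio is expanded pointwise; for `‖w‖ ≥ 1` each of the four terms
  -- is separately `O(σ ‖w‖ ^ 3)`, so no cancellation is needed
  by_cases hw1 : ‖w‖ ≤ 1
  · have hcm := cameronMartin H w
    have hei : Integrable (fun z => H z * Real.exp (⟪w, z⟫ - ‖w‖ ^ 2 / 2)) (stdGaussian E) := by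
      refine integrable_of_le_smooth (b := σ)
        (Continuous.aestronglyMeasurable (by fun_prop)) fun z => ?_
      have hz := norm_nonneg z
      rw [norm_mul, Real.norm_eq_abs, Real.norm_eq_abs, Real.abs_exp]
      have h1 : ⟪w, z⟫ - ‖w‖ ^ 2 / 2 ≤ 1 + ‖z‖ := by
        have := (le_abs_self _).trans (abs_real_inner_le_norm w z)
        nlinarith [sq_nonneg ‖w‖]
      calc |H z| * Real.exp (⟪w, z⟫ - ‖w‖ ^ 2 / 2) ≤ σ * ‖z‖ * Real.exp (1 + ‖z‖) := by
            gcongr; exact hHb z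
        _ ≤ σ * (4 * (1 + ‖z‖) ^ 4) * Real.exp (1 + ‖z‖) := by
            gcongr
            have : 0 ≤ ‖z‖ ^ 2 := by positivity
            have : 0 ≤ ‖z‖ ^ 3 := by positivity
            have : 0 ≤ ‖z‖ ^ 4 := by positivity
            nlinarith
        _ = _ := by ring
    have e5 : ∫ z, H (z + w) ∂(stdGaussian E) + h x - (∫ z, H z ∂(stdGaussian E) + h x)
        - ∫ z, H z * ⟪w, z⟫ ∂(stdGaussian E)
        - ∫ z, H z * ((⟪w, z⟫ ^ 2 - ‖w‖ ^ 2) / 2) ∂(stdGaussian E)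
        = ∫ z, H z * (Real.exp (⟪w, z⟫ - ‖w‖ ^ 2 / 2)
            - (1 + ⟪w, z⟫ + (⟪w, z⟫ ^ 2 - ‖w‖ ^ 2) / 2)) ∂(stdGaussian E) := by
      have : ∀ z, H z * (Real.exp (⟪w, z⟫ - ‖w‖ ^ 2 / 2)
            - (1 + ⟪w, z⟫ + (⟪w, z⟫ ^ 2 - ‖w‖ ^ 2) / 2))
          = H z * Real.exp (⟪w, z⟫ - ‖w‖ ^ 2 / 2) - H z - H z * ⟪w, z⟫
            - H z * ((⟪w, z⟫ ^ 2 - ‖w‖ ^ 2) / 2) := by intro z; ring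
      simp_rw [this]
      rw [integral_sub_sub_sub hei hHi hLui' hQui', hcm]
      ring
    rw [e5]
    refine le_smoothConst fun z => ?_
    have hz := norm_nonneg z
    rw [abs_mul]
    calc |H z| * _ ≤ σ * ‖z‖ * (‖w‖ ^ 3 * (2 * (1 + ‖z‖) ^ 3 * Real.exp (1 + ‖z‖))) := by
          gcongr
          · exact hHb z
          · exact expansion_small w z hw1
      _ = σ * ‖w‖ ^ 3 * (2 * (‖z‖ * (1 + ‖z‖) ^ 3 * Real.exp (1 + ‖z‖))) := by ring
      _ ≤ σ * ‖w‖ ^ 3 * (2 * ((1 + ‖z‖) ^ 4 * Real.exp (1 + ‖z‖))) := by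
          gcongr σ * ‖w‖ ^ 3 * (2 * ?_); exact hwt z
      _ ≤ σ * ‖w‖ ^ 3 * (4 * ((1 + ‖z‖) ^ 4 * Real.exp (1 + ‖z‖))) := by gcongr; norm_num
      _ = _ := by ring
  · have hw1' : 1 ≤ ‖w‖ := (not_le.1 hw1).le
    have e5 : ∫ z, H (z + w) ∂(stdGaussian E) + h x - (∫ z, H z ∂(stdGaussian E) + h x)
        - ∫ z, H z * ⟪w, z⟫ ∂(stdGaussian E)
        - ∫ z, H z * ((⟪w, z⟫ ^ 2 - ‖w‖ ^ 2) / 2) ∂(stdGaussian E)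
        = ∫ z, (H (z + w) - H z - H z * ⟪w, z⟫ - H z * ((⟪w, z⟫ ^ 2 - ‖w‖ ^ 2) / 2))
            ∂(stdGaussian E) := by
      rw [integral_sub_sub_sub hHwi hHi hLui' hQui']
      ring
    rw [e5]
    refine le_smoothConst fun z => ?_
    set r := ‖w‖
    have hz := norm_nonneg z
    have hin : |⟪w, z⟫| ≤ r * ‖z‖ := abs_real_inner_le_norm w z
    have hr2 : r ≤ r ^ 3 := le_self_pow₀ hw1' (by norm_num)
    have hr3 : r ^ 2 ≤ r ^ 3 := pow_le_pow_right₀ hw1' (by norm_num)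
    have hr1 : 1 ≤ r ^ 3 := one_le_pow₀ hw1'
    have b1 : |H (z + w)| ≤ σ * r ^ 3 * (1 + ‖z‖) := by
      refine (hHwb z).trans ?_
      rw [mul_assoc]; gcongr
      nlinarith
    have b2 : |H z| ≤ σ * r ^ 3 * ‖z‖ := by
      refine (hHb z).trans ?_
      rw [mul_assoc]; gcongr
      nlinarith
    have b3 : |H z * ⟪w, z⟫| ≤ σ * r ^ 3 * ‖z‖ ^ 2 := by
      rw [abs_mul]
      calc |H z| * |⟪w, z⟫| ≤ (σ * ‖z‖) * (r * ‖z‖) := by gcongr; exact hHb z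
        _ ≤ (σ * ‖z‖) * (r ^ 3 * ‖z‖) := by gcongr
        _ = _ := by ring
    have b4 : |H z * ((⟪w, z⟫ ^ 2 - r ^ 2) / 2)| ≤ σ * r ^ 3 * (‖z‖ * (‖z‖ ^ 2 + 1)) := by
      rw [abs_mul]
      have : |(⟪w, z⟫ ^ 2 - r ^ 2) / 2| ≤ r ^ 2 * (‖z‖ ^ 2 + 1) := by
        have h1 : ⟪w, z⟫ ^ 2 ≤ (r * ‖z‖) ^ 2 := sq_le_sq' (by linarith [neg_abs_le ⟪w, z⟫])
          ((le_abs_self _).trans hin)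
        have h2 : 0 ≤ ⟪w, z⟫ ^ 2 := sq_nonneg _
        have h3 : 0 ≤ r ^ 2 := sq_nonneg _
        have h4 : 0 ≤ r ^ 2 * ‖z‖ ^ 2 := by positivity
        rw [abs_le]; constructor <;> nlinarith
      calc |H z| * _ ≤ (σ * ‖z‖) * (r ^ 2 * (‖z‖ ^ 2 + 1)) := by gcongr; exact hHb z
        _ ≤ (σ * ‖z‖) * (r ^ 3 * (‖z‖ ^ 2 + 1)) := by gcongr
        _ = _ := by ring
    have b5 : |H (z + w) - H z - H z * ⟪w, z⟫ - H z * ((⟪w, z⟫ ^ 2 - r ^ 2) / 2)|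
        ≤ |H (z + w)| + |H z| + |H z * ⟪w, z⟫| + |H z * ((⟪w, z⟫ ^ 2 - r ^ 2) / 2)| := by
      refine (abs_sub _ _).trans ?_
      gcongr
      refine (abs_sub _ _).trans ?_
      gcongr
      exact abs_sub _ _
    calc _ ≤ σ * r ^ 3 * (1 + ‖z‖) + σ * r ^ 3 * ‖z‖ + σ * r ^ 3 * ‖z‖ ^ 2
          + σ * r ^ 3 * (‖z‖ * (‖z‖ ^ 2 + 1)) := by linarith
      _ = σ * r ^ 3 * (1 + 3 * ‖z‖ + ‖z‖ ^ 2 + ‖z‖ ^ 3) := by ring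
      _ ≤ σ * r ^ 3 * (4 * (1 + ‖z‖) ^ 4 * 1) := by
        gcongr
        have : 0 ≤ ‖z‖ ^ 2 := by positivity
        have : 0 ≤ ‖z‖ ^ 3 := by positivity
        have : 0 ≤ ‖z‖ ^ 4 := by positivity
        nlinarith
      _ ≤ _ := by gcongr; exact hone z

end Smoothing

/-! ### Gaussian laws on Euclidean space -/

section Gaussian

variable {d : ℕ}

/-- The centered Gaussian law on `ℝ^d` with covariance matrix `C` (meaningful for `C` positive
semidefinite). -/
noncomputable abbrev gauss (C : Matrix (Fin d) (Fin d) ℝ) : Measure (EuclideanSpace ℝ (Fin d)) :=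
  multivariateGaussian 0 C

lemma charFun_gauss {C : Matrix (Fin d) (Fin d) ℝ} (hC : C.PosSemidef)
    (t : EuclideanSpace ℝ (Fin d)) :
    charFun (gauss C) t = Complex.exp (-((⟪t, toEuclideanCLM (𝕜 := ℝ) C t⟫ : ℝ) : ℂ) / 2) := by
  rw [charFun_multivariateGaussian hC, inner_toEuclideanCLM]
  simp [neg_div]

lemma inner_toEuclideanCLM_left (B : Matrix (Fin d) (Fin d) ℝ) (x t : EuclideanSpace ℝ (Fin d)) :
    ⟪toEuclideanCLM (𝕜 := ℝ) B x, t⟫ = ⟪x, toEuclideanCLM (𝕜 := ℝ) Bᵀ t⟫ := by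
  have : toEuclideanCLM (𝕜 := ℝ) Bᵀ = ContinuousLinearMap.adjoint (toEuclideanCLM (𝕜 := ℝ) B) := by
    rw [← ContinuousLinearMap.star_eq_adjoint, ← map_star]
    rfl
  rw [this, ContinuousLinearMap.adjoint_inner_right]

/-- If `η` and `w` are independent with laws `N(0, C)` and `N(0, D)`, then `B η + w` has law
`N(0, B C Bᵀ + D)`. -/
lemma gauss_conv (B : Matrix (Fin d) (Fin d) ℝ) {C D : Matrix (Fin d) (Fin d) ℝ}
    (hC : C.PosSemidef) (hD : D.PosSemidef) :
    ((gauss C).map (toEuclideanCLM (𝕜 := ℝ) B)) ∗ (gauss D) = gauss (B * C * Bᵀ + D) := by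
  have hBC : (B * C * Bᵀ).PosSemidef := by
    simpa using hC.mul_mul_conjTranspose_same B
  have : IsProbabilityMeasure ((gauss C).map (toEuclideanCLM (𝕜 := ℝ) B)) :=
    Measure.isProbabilityMeasure_map (by fun_prop)
  apply Measure.ext_of_charFun
  ext t
  rw [charFun_conv, charFun_gauss hD, charFun_gauss (hBC.add hD)]
  have h1 : charFun ((gauss C).map (toEuclideanCLM (𝕜 := ℝ) B)) t
      = charFun (gauss C) (toEuclideanCLM (𝕜 := ℝ) Bᵀ t) := by
    rw [charFun_apply, charFun_apply, integral_map (by fun_prop)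
      (Continuous.aestronglyMeasurable (by fun_prop))]
    simp_rw [inner_toEuclideanCLM_left]
  rw [h1, charFun_gauss hC, ← Complex.exp_add]
  congr 1
  have h2 : ⟪toEuclideanCLM (𝕜 := ℝ) Bᵀ t, toEuclideanCLM (𝕜 := ℝ) C
      (toEuclideanCLM (𝕜 := ℝ) Bᵀ t)⟫ = ⟪t, toEuclideanCLM (𝕜 := ℝ) (B * C * Bᵀ) t⟫ := by
    rw [inner_toEuclideanCLM_left, transpose_transpose, map_mul, map_mul]
    rfl
  rw [h2, map_add, _root_.add_apply, inner_add_right]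
  push_cast
  ring

lemma integrable_of_lipschitz {X : Type*} [NormedAddCommGroup X] [MeasurableSpace X] [BorelSpace X]
    [SecondCountableTopology X]
    {μ : Measure X} [IsProbabilityMeasure μ] (hμ : Integrable (fun x => ‖x‖) μ)
    {f : X → ℝ} {K : ℝ≥0} (hf : LipschitzWith K f) : Integrable f μ := by
  refine ((hμ.const_mul (K : ℝ)).add (integrable_const |f 0|)).mono'
    hf.continuous.aestronglyMeasurable (Filter.Eventually.of_forall fun x => ?_)
  have := hf.dist_le_mul x 0
  rw [Real.dist_eq, dist_zero_right] at this
  rw [Real.norm_eq_abs]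
  have h2 := abs_sub_abs_le_abs_sub (f x) (f 0)
  simp only [Pi.add_apply]
  linarith

lemma integrable_norm_gauss (C : Matrix (Fin d) (Fin d) ℝ) :
    Integrable (fun x => ‖x‖) (gauss C) :=
  (IsGaussian.integrable_id (μ := gauss C)).norm

lemma integrable_norm_pow_gauss (C : Matrix (Fin d) (Fin d) ℝ) (n : ℕ) :
    Integrable (fun x => ‖x‖ ^ n) (gauss C) :=
  (IsGaussian.memLp_id (gauss C) n (by simp)).integrable_norm_pow'

lemma integral_gauss_comp (B : Matrix (Fin d) (Fin d) ℝ) {C D : Matrix (Fin d) (Fin d) ℝ}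
    (hC : C.PosSemidef) (hD : D.PosSemidef) {f : EuclideanSpace ℝ (Fin d) → ℝ} {K : ℝ≥0}
    (hf : LipschitzWith K f) :
    ∫ x, f x ∂(gauss (B * C * Bᵀ + D))
      = ∫ η, ∫ w, f (toEuclideanCLM (𝕜 := ℝ) B η + w) ∂(gauss D) ∂(gauss C) := by
  have hi := integrable_of_lipschitz (integrable_norm_gauss (B * C * Bᵀ + D)) hf
  rw [← gauss_conv B hC hD] at hi ⊢
  rw [integral_conv hi, integral_map (by fun_prop)]
  refine StronglyMeasurable.aestronglyMeasurable ?_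
  refine StronglyMeasurable.integral_prod_right (f := fun x y => f (x + y)) ?_
  have := hf.continuous
  exact (by fun_prop : Continuous fun p : EuclideanSpace ℝ (Fin d) × EuclideanSpace ℝ (Fin d) =>
    f (p.1 + p.2)).stronglyMeasurable

/-- Averaging translates preserves the Lipschitz constant. -/
lemma lipschitz_average {X : Type*} [NormedAddCommGroup X] [MeasurableSpace X] [BorelSpace X]
    [SecondCountableTopology X]
    {μ : Measure X} [IsProbabilityMeasure μ] (hμ : Integrable (fun x => ‖x‖) μ)
    {f : X → ℝ} {K : ℝ≥0} (hf : LipschitzWith K f) :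
    LipschitzWith K (fun x => ∫ w, f (x + w) ∂μ) := by
  have hi : ∀ x, Integrable (fun w => f (x + w)) μ := fun x =>
    integrable_of_lipschitz hμ (f := fun w => f (x + w)) (K := K) (by
      refine LipschitzWith.of_dist_le_mul fun y z => ?_
      simpa using hf.dist_le_mul (x + y) (x + z))
  refine LipschitzWith.of_dist_le_mul fun x y => ?_
  rw [Real.dist_eq, ← integral_sub (hi x) (hi y), ← Real.norm_eq_abs]
  refine (norm_integral_le_of_norm_le_const (C := K * dist x y)
    (Filter.Eventually.of_forall fun w => ?_)).trans (by simp)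
  have := hf.dist_le_mul (x + w) (y + w)
  simpa [Real.dist_eq] using this

/-- The third absolute moment of the standard Gaussian. -/
noncomputable def stdThird (d : ℕ) : ℝ :=
  ∫ z, ‖z‖ ^ 3 ∂(stdGaussian (EuclideanSpace ℝ (Fin d)))

lemma stdThird_nonneg : 0 ≤ stdThird d := integral_nonneg fun z => by positivity

lemma third_moment_gauss {C : Matrix (Fin d) (Fin d) ℝ} (hC : C.PosSemidef) {b : ℝ} (hb : 0 ≤ b)
    (hCb : ∀ z, ⟪z, toEuclideanCLM (𝕜 := ℝ) C z⟫ ≤ b ^ 2 * ‖z‖ ^ 2) :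
    ∫ x, ‖x‖ ^ 3 ∂(gauss C) ≤ b ^ 3 * stdThird d := by
  open scoped MatrixOrder in
  have hsq : ∀ z, ‖toEuclideanCLM (𝕜 := ℝ) (CFC.sqrt C) z‖ ≤ b * ‖z‖ := by
    intro z
    have hs : (CFC.sqrt C)ᵀ = CFC.sqrt C := by
      have := (CFC.sqrt_nonneg C).isSelfAdjoint.star_eq
      simpa [star_eq_conjTranspose] using this
    have : ‖toEuclideanCLM (𝕜 := ℝ) (CFC.sqrt C) z‖ ^ 2 ≤ (b * ‖z‖) ^ 2 := by
      rw [← real_inner_self_eq_norm_sq, inner_toEuclideanCLM_left, hs,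
        ← mul_apply_eq_comp, ← map_mul, CFC.sqrt_mul_sqrt_self _ hC.nonneg, mul_pow]
      exact hCb z
    exact le_of_sq_le_sq this (by positivity)
  rw [gauss, multivariateGaussian, integral_map (by fun_prop)
    (Continuous.aestronglyMeasurable (by fun_prop)), stdThird, ← integral_const_mul]
  have h3 : Integrable (fun x => ‖x‖ ^ 3) (stdGaussian (EuclideanSpace ℝ (Fin d))) :=
    (IsGaussian.memLp_id (stdGaussian (EuclideanSpace ℝ (Fin d))) (3 : ℕ)
      (by simp)).integrable_norm_pow'
  refine integral_mono_of_nonneg (Filter.Eventually.of_forall fun x => by positivity)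
    (h3.const_mul _) (Filter.Eventually.of_forall fun x => ?_)
  simp only [zero_add]
  rw [← mul_pow]
  gcongr
  exact hsq x

end Gaussian

/-! ### Lindeberg comparison -/

section OneStep

variable {d : ℕ}

lemma second_moment_gauss {C : Matrix (Fin d) (Fin d) ℝ} (hC : C.PosSemidef) (i j : Fin d) :
    ∫ x, x i * x j ∂(gauss C) = C i j := by
  have h := covariance_eval_multivariateGaussian (μ := 0) hC i j
  have hm : MemLp (fun x : EuclideanSpace ℝ (Fin d) => x) 2 (gauss C) :=
    IsGaussian.memLp_two_id
  have hi : ∀ i, MemLp (fun x : EuclideanSpace ℝ (Fin d) => x i) 2 (gauss C) := fun i =>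
    (EuclideanSpace.proj (𝕜 := ℝ) i).comp_memLp' hm
  have h0 : ∀ i, ∫ x, x i ∂(gauss C) = 0 := fun i => by
    have := (EuclideanSpace.proj (𝕜 := ℝ) i).integral_comp_comm
      (IsGaussian.integrable_id (μ := gauss C))
    simpa using this
  rw [covariance_eq_sub (hi i) (hi j), h0 i, zero_mul, sub_zero] at h
  simpa using h

lemma integrable_norm_of_cube {X : Type*} [NormedAddCommGroup X] [MeasurableSpace X] [BorelSpace X]
    [SecondCountableTopology X] {μ : Measure X} [IsProbabilityMeasure μ]
    (h3 : Integrable (fun x => ‖x‖ ^ 3) μ) :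
    Integrable (fun x => ‖x‖) μ ∧ Integrable (fun x => ‖x‖ ^ 2) μ := by
  constructor
  · refine (h3.add (integrable_const 1)).mono' (by fun_prop) (Filter.Eventually.of_forall fun x => ?_)
    have := norm_nonneg x
    simp only [Pi.add_apply, norm_norm]
    nlinarith [sq_nonneg (‖x‖ - 1), mul_nonneg this (sq_nonneg (‖x‖ - 1))]
  · refine (h3.add (integrable_const 1)).mono' (by fun_prop) (Filter.Eventually.of_forall fun x => ?_)
    have := norm_nonneg x
    simp only [Pi.add_apply, norm_pow, norm_norm]
    nlinarith [sq_nonneg (‖x‖ - 1), mul_nonneg this (sq_nonneg (‖x‖ - 1))]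

lemma integral_expansion {ρ : Measure (EuclideanSpace ℝ (Fin d))} [IsProbabilityMeasure ρ]
    (hmean : ∫ x, x ∂ρ = 0) {V : Matrix (Fin d) (Fin d) ℝ}
    (hcov : ∀ i j, ∫ x, x i * x j ∂ρ = V i j) (h3 : Integrable (fun x => ‖x‖ ^ 3) ρ)
    {f : EuclideanSpace ℝ (Fin d) → ℝ} (hf : Integrable f ρ)
    (ℓ : EuclideanSpace ℝ (Fin d) →L[ℝ] ℝ)
    (q : EuclideanSpace ℝ (Fin d) →L[ℝ] EuclideanSpace ℝ (Fin d) →L[ℝ] ℝ) {K : ℝ}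
    (hexp : ∀ u, |f u - f 0 - ℓ u - q u u| ≤ K * ‖u‖ ^ 3) :
    |∫ u, f u ∂ρ - f 0 - ∑ i, ∑ j, q (EuclideanSpace.single i 1) (EuclideanSpace.single j 1) * V i j|
      ≤ K * ∫ u, ‖u‖ ^ 3 ∂ρ := by
  obtain ⟨h1, h2⟩ := integrable_norm_of_cube h3
  have hid : Integrable (fun x : EuclideanSpace ℝ (Fin d) => x) ρ :=
    (integrable_norm_iff (by fun_prop)).1 h1
  have hℓi : Integrable (fun u => ℓ u) ρ := ℓ.integrable_comp hid
  have hℓ : ∫ u, ℓ u ∂ρ = 0 := by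
    have := ℓ.integral_comp_comm hid
    rw [this, hmean, map_zero]
  have hqe : ∀ u, q u u = ∑ i, ∑ j, q (EuclideanSpace.single i 1) (EuclideanSpace.single j 1)
      * (u i * u j) := by
    intro u
    have hu : u = ∑ i, u i • EuclideanSpace.single i (1 : ℝ) := by
      have := (EuclideanSpace.basisFun (Fin d) ℝ).sum_repr u
      simpa using this.symm
    conv_lhs => rw [hu]
    simp only [map_sum, map_smul, _root_.sum_apply, _root_.smul_apply, smul_eq_mul,
      Finset.mul_sum]
    rw [Finset.sum_comm]
    refine Finset.sum_congr rfl fun i _ => Finset.sum_congr rfl fun j _ => ?_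
    ring
  have hci : ∀ i j, Integrable (fun u : EuclideanSpace ℝ (Fin d) => u i * u j) ρ := by
    intro i j
    refine h2.mono' (by fun_prop) (Filter.Eventually.of_forall fun u => ?_)
    rw [norm_mul, sq]
    gcongr
    · exact PiLp.norm_apply_le u i
    · exact PiLp.norm_apply_le u j
  have hqi : Integrable (fun u => q u u) ρ := by
    simp_rw [hqe]
    exact integrable_finsetSum _ fun i _ => integrable_finsetSum _ fun j _ => (hci i j).const_mul _
  have hq : ∫ u, q u u ∂ρ
      = ∑ i, ∑ j, q (EuclideanSpace.single i 1) (EuclideanSpace.single j 1) * V i j := by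
    simp_rw [hqe]
    rw [integral_finsetSum _ fun i _ =>
      integrable_finsetSum _ fun j _ => (hci i j).const_mul _]
    refine Finset.sum_congr rfl fun i _ => ?_
    rw [integral_finsetSum _ fun j _ => (hci i j).const_mul _]
    refine Finset.sum_congr rfl fun j _ => ?_
    rw [integral_const_mul, hcov]
  have e : ∫ u, f u ∂ρ - f 0
      - ∑ i, ∑ j, q (EuclideanSpace.single i 1) (EuclideanSpace.single j 1) * V i j
      = ∫ u, (f u - f 0 - ℓ u - q u u) ∂ρ := by
    rw [integral_sub_sub_sub hf (integrable_const _) hℓi hqi, hℓ, hq]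
    simp
  rw [e, ← integral_const_mul, ← Real.norm_eq_abs]
  exact norm_integral_le_of_norm_le (h3.const_mul K) (Filter.Eventually.of_forall hexp)

/-- Lindeberg comparison: two centered laws with nearby covariances integrate a function with a
second order expansion almost identically. -/
lemma lindeberg {ρ₁ ρ₂ : Measure (EuclideanSpace ℝ (Fin d))} [IsProbabilityMeasure ρ₁]
    [IsProbabilityMeasure ρ₂] (hmean₁ : ∫ x, x ∂ρ₁ = 0) (hmean₂ : ∫ x, x ∂ρ₂ = 0)
    {V₁ V₂ : Matrix (Fin d) (Fin d) ℝ}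
    (hcov₁ : ∀ i j, ∫ x, x i * x j ∂ρ₁ = V₁ i j) (hcov₂ : ∀ i j, ∫ x, x i * x j ∂ρ₂ = V₂ i j)
    (h3₁ : Integrable (fun x => ‖x‖ ^ 3) ρ₁) (h3₂ : Integrable (fun x => ‖x‖ ^ 3) ρ₂)
    {f : EuclideanSpace ℝ (Fin d) → ℝ} (hf₁ : Integrable f ρ₁) (hf₂ : Integrable f ρ₂)
    (ℓ : EuclideanSpace ℝ (Fin d) →L[ℝ] ℝ)
    (q : EuclideanSpace ℝ (Fin d) →L[ℝ] EuclideanSpace ℝ (Fin d) →L[ℝ] ℝ) {K κ : ℝ}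
    (hexp : ∀ u, |f u - f 0 - ℓ u - q u u| ≤ K * ‖u‖ ^ 3)
    (hq : ∀ u w, |q u w| ≤ κ * ‖u‖ * ‖w‖) :
    |∫ u, f u ∂ρ₁ - ∫ u, f u ∂ρ₂| ≤ K * (∫ u, ‖u‖ ^ 3 ∂ρ₁ + ∫ u, ‖u‖ ^ 3 ∂ρ₂)
      + κ * ∑ i, ∑ j, |V₁ i j - V₂ i j| := by
  have a₁ := integral_expansion hmean₁ hcov₁ h3₁ hf₁ ℓ q hexp
  have a₂ := integral_expansion hmean₂ hcov₂ h3₂ hf₂ ℓ q hexp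
  set e : Fin d → EuclideanSpace ℝ (Fin d) := fun i => EuclideanSpace.single i 1
  have a₃ : |∑ i, ∑ j, q (e i) (e j) * V₁ i j - ∑ i, ∑ j, q (e i) (e j) * V₂ i j|
      ≤ κ * ∑ i, ∑ j, |V₁ i j - V₂ i j| := by
    rw [← Finset.sum_sub_distrib, Finset.mul_sum]
    refine (Finset.abs_sum_le_sum_abs _ _).trans (Finset.sum_le_sum fun i _ => ?_)
    rw [← Finset.sum_sub_distrib, Finset.mul_sum]
    refine (Finset.abs_sum_le_sum_abs _ _).trans (Finset.sum_le_sum fun j _ => ?_)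
    rw [← mul_sub, abs_mul]
    gcongr
    have := hq (e i) (e j)
    simpa [e] using this
  rw [abs_le] at *
  constructor <;> linarith [a₁.1, a₁.2, a₂.1, a₂.2, a₃.1, a₃.2]

/-- Expansion of `y ↦ ∫ h (V y + w) dN(0, C)(w)` when `C` dominates `σ² I`. -/
lemma exists_expansion_gauss (h : EuclideanSpace ℝ (Fin d) → ℝ) (hh : LipschitzWith 1 h)
    {σ κ : ℝ} (hσ : 0 < σ) (hκ : 0 ≤ κ) {C V : Matrix (Fin d) (Fin d) ℝ}
    (hC : (C - σ ^ 2 • (1 : Matrix (Fin d) (Fin d) ℝ)).PosSemidef)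
    (hV : ∀ y, ‖toEuclideanCLM (𝕜 := ℝ) V y‖ ≤ κ * ‖y‖) (x : EuclideanSpace ℝ (Fin d)) :
    ∃ (ℓ : EuclideanSpace ℝ (Fin d) →L[ℝ] ℝ)
      (q : EuclideanSpace ℝ (Fin d) →L[ℝ] EuclideanSpace ℝ (Fin d) →L[ℝ] ℝ),
      (∀ u, |∫ w, h (toEuclideanCLM (𝕜 := ℝ) V (x + u) + w) ∂(gauss C)
          - ∫ w, h (toEuclideanCLM (𝕜 := ℝ) V x + w) ∂(gauss C) - ℓ u - q u u|
          ≤ smoothConst (EuclideanSpace ℝ (Fin d)) * κ ^ 3 / σ ^ 2 * ‖u‖ ^ 3) ∧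
      ∀ u w, |q u w| ≤ smoothConst (EuclideanSpace ℝ (Fin d)) * κ ^ 2 / σ * ‖u‖ * ‖w‖ := by
  set T := toEuclideanCLM (𝕜 := ℝ) V
  -- `N(0, C)` is the convolution of `N(0, σ² I)` and `N(0, D)`, and averaging `h` over `N(0, D)`
  -- keeps it 1-Lipschitz
  set D := C - σ ^ 2 • (1 : Matrix (Fin d) (Fin d) ℝ) with hD
  set h' : EuclideanSpace ℝ (Fin d) → ℝ := fun y => ∫ w, h (y + w) ∂(gauss D) with hh'
  have hlip' : LipschitzWith 1 h' := lipschitz_average (integrable_norm_gauss D) hh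
  have hCeq : C = (σ • (1 : Matrix (Fin d) (Fin d) ℝ)) * 1 * (σ • (1 : Matrix (Fin d) (Fin d) ℝ))ᵀ
      + D := by
    rw [hD]; simp [smul_smul, sq]
  have hrep : ∀ a, ∫ w, h (a + w) ∂(gauss C)
      = ∫ z, h' (a + σ • z) ∂(stdGaussian (EuclideanSpace ℝ (Fin d))) := by
    intro a
    have hl : LipschitzWith 1 (fun w => h (a + w)) := by
      refine LipschitzWith.of_dist_le_mul fun y z => ?_
      simpa using hh.dist_le_mul (a + y) (a + z)
    rw [hCeq, integral_gauss_comp _ PosSemidef.one hC hl, gauss, multivariateGaussian_zero_one]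
    refine integral_congr_ae (Filter.Eventually.of_forall fun z => ?_)
    simp only [hh', map_smul, map_one, _root_.smul_apply, one_apply_eq_self, add_assoc]
  obtain ⟨ℓ, q, h1, h2⟩ := exists_expansion h' hlip' hσ (T x)
  refine ⟨ℓ.comp T, (q.comp T).flip.comp T |>.flip, fun u => ?_, fun u w => ?_⟩
  · have := h1 (T u)
    rw [hrep, hrep, map_add]
    refine this.trans ?_
    have h3 : ‖T u‖ ^ 3 ≤ (κ * ‖u‖) ^ 3 := by gcongr; exact hV u
    have hs := smoothConst_nonneg (E := EuclideanSpace ℝ (Fin d))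
    calc _ ≤ smoothConst (EuclideanSpace ℝ (Fin d)) * (κ * ‖u‖) ^ 3 / σ ^ 2 := by gcongr
      _ = _ := by ring
  · refine (h2 (T u) (T w)).trans ?_
    have hs := smoothConst_nonneg (E := EuclideanSpace ℝ (Fin d))
    calc _ ≤ smoothConst (EuclideanSpace ℝ (Fin d)) / σ * (κ * ‖u‖) * (κ * ‖w‖) := by
          gcongr
          · exact hV u
          · exact hV w
      _ = _ := by ring

end OneStep

/-! ### The linearised chain -/

section LinearAlgebra

variable {d : ℕ}

lemma posSemidef_of_inner {M : Matrix (Fin d) (Fin d) ℝ} (hM : Mᵀ = M)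
    (h : ∀ v, 0 ≤ ⟪v, toEuclideanCLM (𝕜 := ℝ) M v⟫) : M.PosSemidef := by
  rw [posSemidef_iff_dotProduct_mulVec]
  refine ⟨by simpa [IsHermitian] using hM, fun x => ?_⟩
  have := h (WithLp.toLp 2 x)
  rw [inner_toEuclideanCLM] at this
  simpa using this

lemma exists_pos_le_inner {M : Matrix (Fin d) (Fin d) ℝ} (hM : M.PosDef) :
    ∃ s > 0, ∀ v, s * ‖v‖ ^ 2 ≤ ⟪v, toEuclideanCLM (𝕜 := ℝ) M v⟫ := by
  have hpos : ∀ v : EuclideanSpace ℝ (Fin d), v ≠ 0 →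
      0 < ⟪v, toEuclideanCLM (𝕜 := ℝ) M v⟫ := by
    intro v hv
    rw [inner_toEuclideanCLM]
    have := (posDef_iff_dotProduct_mulVec.1 hM).2 (x := v.ofLp) (by simpa using hv)
    simpa using this
  rcases (Metric.sphere (0 : EuclideanSpace ℝ (Fin d)) 1).eq_empty_or_nonempty with he | hne
  · refine ⟨1, one_pos, fun v => ?_⟩
    by_cases hv : v = 0
    · simp [hv]
    · have : ‖v‖⁻¹ • v ∈ Metric.sphere (0 : EuclideanSpace ℝ (Fin d)) 1 := by
        simp [norm_smul, hv]
      simp [he] at this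
  · obtain ⟨u, hu, hmin⟩ := (isCompact_sphere (0 : EuclideanSpace ℝ (Fin d)) 1).exists_isMinOn hne
      (f := fun v => ⟪v, toEuclideanCLM (𝕜 := ℝ) M v⟫) (by fun_prop)
    refine ⟨⟪u, toEuclideanCLM (𝕜 := ℝ) M u⟫, hpos u ?_, fun v => ?_⟩
    · rintro rfl
      simp at hu
    · by_cases hv : v = 0
      · simp [hv]
      · have hm : ‖v‖⁻¹ • v ∈ Metric.sphere (0 : EuclideanSpace ℝ (Fin d)) 1 := by
          simp [norm_smul, hv]
        have h := hmin hm
        simp only [Set.mem_ofPred_eq, map_smul, inner_smul_left, inner_smul_right] at h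
        have hv' : 0 < ‖v‖ := norm_pos_iff.2 hv
        calc _ ≤ (‖v‖⁻¹ * (‖v‖⁻¹ * ⟪v, toEuclideanCLM (𝕜 := ℝ) M v⟫)) * ‖v‖ ^ 2 := by
              gcongr
              simpa using h
          _ = _ := by field_simp

lemma inner_le_opNorm (M : Matrix (Fin d) (Fin d) ℝ) (v : EuclideanSpace ℝ (Fin d)) :
    ⟪v, toEuclideanCLM (𝕜 := ℝ) M v⟫ ≤ ‖toEuclideanCLM (𝕜 := ℝ) M‖ * ‖v‖ ^ 2 := by
  refine (real_inner_le_norm _ _).trans ?_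
  have := (toEuclideanCLM (𝕜 := ℝ) M).le_opNorm v
  nlinarith [norm_nonneg v]

/-- The matrix `1 + αJ` of one step of the linearised chain. -/
abbrev stepMat (J : Matrix (Fin d) (Fin d) ℝ) (α : ℝ) : Matrix (Fin d) (Fin d) ℝ := 1 + α • J

/-- The noise covariance for which `N(0, Σ_Y)` is exactly invariant under the linearised chain
`y ↦ (1 + αJ) y + η`; it differs from `αS` by `O(α²)`. -/
abbrev noiseCov (J S SY : Matrix (Fin d) (Fin d) ℝ) (α : ℝ) : Matrix (Fin d) (Fin d) ℝ :=
  α • S - α ^ 2 • (J * SY * Jᵀ)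

/-- The covariance of `k` steps of the linearised chain started at a point. -/
abbrev stepCov (J SY : Matrix (Fin d) (Fin d) ℝ) (α : ℝ) (k : ℕ) : Matrix (Fin d) (Fin d) ℝ :=
  SY - stepMat J α ^ k * SY * (stepMat J α ^ k)ᵀ

/-- The Lyapunov equation in discrete form: `N(0, Σ_Y)` is exactly invariant under the linearised
chain with noise covariance `noiseCov`. -/
lemma lyapunov_step {J S SY : Matrix (Fin d) (Fin d) ℝ} (hLyap : J * SY + SY * Jᵀ = -S) (α : ℝ) :
    stepMat J α * SY * (stepMat J α)ᵀ = SY - noiseCov J S SY α := by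
  have hS : S = -(J * SY + SY * Jᵀ) := by rw [hLyap, neg_neg]
  simp only [stepMat, noiseCov]
  rw [hS, transpose_add, transpose_one, transpose_smul]
  simp only [add_mul, mul_add, one_mul, mul_one, smul_mul_assoc, mul_smul_comm]
  module

set_option maxHeartbeats 1000000 in
/-- Uniform estimates for the linearised chain at small stepsize. With `Σ_Y` as Lyapunov function the
chain contracts at rate `c`: its squared operator norm after `k` steps is at most
`K ^ 2 * (1 - cα) ^ k`. The `k`-step covariance is bounded below by `l * (1 - (1 - cα) ^ k)`, and the
one-step noise covariance above by `α * K ^ 2`. The stability of `J` enters only through the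
positivity of `S` and `Σ_Y` in the Lyapunov equation. -/
lemma exists_linear_constants {J S SY : Matrix (Fin d) (Fin d) ℝ} (hS : S.PosDef)
    (hSY : SY.PosDef) (hLyap : J * SY + SY * Jᵀ = -S) :
    ∃ a ∈ Set.Ioc (0 : ℝ) 1, ∃ c > 0, ∃ l > 0, ∃ K ≥ 0, ∀ α ∈ Set.Ioo (0 : ℝ) a,
      c * α < 1 ∧ (noiseCov J S SY α).PosSemidef ∧
      (∀ z, ⟪z, toEuclideanCLM (𝕜 := ℝ) (noiseCov J S SY α) z⟫ ≤ α * K ^ 2 * ‖z‖ ^ 2) ∧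
      (∀ k, (stepCov J SY α k).PosSemidef) ∧
      (∀ k, (stepCov J SY α k
        - (l * (1 - (1 - c * α) ^ k)) • (1 : Matrix (Fin d) (Fin d) ℝ)).PosSemidef) ∧
      (∀ k v, ‖toEuclideanCLM (𝕜 := ℝ) (stepMat J α ^ k) v‖ ^ 2
        ≤ K ^ 2 * (1 - c * α) ^ k * ‖v‖ ^ 2) := by
  obtain ⟨s, hs, hs'⟩ := exists_pos_le_inner hS
  obtain ⟨l, hl, hl'⟩ := exists_pos_le_inner hSY
  set b := ‖toEuclideanCLM (𝕜 := ℝ) (J * SY * Jᵀ)‖ + 1 with hb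
  set Λ := ‖toEuclideanCLM (𝕜 := ℝ) SY‖ + 1 with hΛ
  set ΛS := ‖toEuclideanCLM (𝕜 := ℝ) S‖ with hΛS
  have hb0 : 0 < b := by positivity
  have hΛ0 : 0 < Λ := by positivity
  have hΛS0 : 0 ≤ ΛS := norm_nonneg _
  have hbv : ∀ v, ⟪v, toEuclideanCLM (𝕜 := ℝ) (J * SY * Jᵀ) v⟫ ≤ b * ‖v‖ ^ 2 := fun v =>
    (inner_le_opNorm _ v).trans (by gcongr; linarith)
  have hΛv : ∀ v, ⟪v, toEuclideanCLM (𝕜 := ℝ) SY v⟫ ≤ Λ * ‖v‖ ^ 2 := fun v =>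
    (inner_le_opNorm _ v).trans (by gcongr; linarith)
  have hSYt : SYᵀ = SY := by simpa [IsHermitian] using hSY.1
  have hSt : Sᵀ = S := by simpa [IsHermitian] using hS.1
  have hJ0 : ∀ v, 0 ≤ ⟪v, toEuclideanCLM (𝕜 := ℝ) (J * SY * Jᵀ) v⟫ := by
    intro v
    have e : ⟪v, toEuclideanCLM (𝕜 := ℝ) (J * SY * Jᵀ) v⟫ = ⟪toEuclideanCLM (𝕜 := ℝ) Jᵀ v,
        toEuclideanCLM (𝕜 := ℝ) SY (toEuclideanCLM (𝕜 := ℝ) Jᵀ v)⟫ := by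
      rw [inner_toEuclideanCLM_left, transpose_transpose, map_mul, map_mul]
      rfl
    rw [e]
    exact le_trans (by positivity) (hl' _)
  set c := s / (2 * Λ) with hc
  have hc0 : 0 < c := by positivity
  set a := min 1 (min (s / (2 * b)) (1 / c)) with ha
  set K := √(ΛS + Λ / l) with hK
  have hK2 : K ^ 2 = ΛS + Λ / l := Real.sq_sqrt (by positivity)
  refine ⟨a, ⟨by positivity, min_le_left _ _⟩, c, hc0, l, hl, K, by positivity, ?_⟩
  rintro α ⟨hα0, hαa⟩
  have hα1 : α * b ≤ s / 2 := by
    have : α ≤ s / (2 * b) := hαa.le.trans ((min_le_right _ _).trans (min_le_left _ _))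
    calc α * b ≤ s / (2 * b) * b := by gcongr
      _ = s / 2 := by field_simp
  have hα2 : c * α < 1 := by
    have : α < 1 / c := hαa.trans_le ((min_le_right _ _).trans (min_le_right _ _))
    rw [lt_div_iff₀ hc0] at this
    linarith
  have hD : ∀ v, ⟪v, toEuclideanCLM (𝕜 := ℝ) (noiseCov J S SY α) v⟫
      = α * ⟪v, toEuclideanCLM (𝕜 := ℝ) S v⟫
        - α ^ 2 * ⟪v, toEuclideanCLM (𝕜 := ℝ) (J * SY * Jᵀ) v⟫ := by
    intro v
    rw [noiseCov, map_sub, map_smul, map_smul, _root_.sub_apply, _root_.smul_apply,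
      _root_.smul_apply, inner_sub_right, inner_smul_right, inner_smul_right]
  -- `α` is so small that the `O(α²)` correction costs at most half of `αS`
  have hDlow : ∀ v, c * α * ⟪v, toEuclideanCLM (𝕜 := ℝ) SY v⟫
      ≤ ⟪v, toEuclideanCLM (𝕜 := ℝ) (noiseCov J S SY α) v⟫ := by
    intro v
    rw [hD]
    have h1 : c * ⟪v, toEuclideanCLM (𝕜 := ℝ) SY v⟫ ≤ s / 2 * ‖v‖ ^ 2 := by
      calc _ ≤ c * (Λ * ‖v‖ ^ 2) := by gcongr; exact hΛv v
        _ = _ := by rw [hc]; field_simp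
    have h2 := hs' v
    have h3 : α * ⟪v, toEuclideanCLM (𝕜 := ℝ) (J * SY * Jᵀ) v⟫ ≤ s / 2 * ‖v‖ ^ 2 := by
      calc _ ≤ α * (b * ‖v‖ ^ 2) := by gcongr; exact hbv v
        _ = α * b * ‖v‖ ^ 2 := by ring
        _ ≤ _ := by gcongr
    nlinarith
  have hSY0 : ∀ v, 0 ≤ ⟪v, toEuclideanCLM (𝕜 := ℝ) SY v⟫ := fun v =>
    le_trans (by positivity) (hl' v)
  have hpow : ∀ k v, ⟪v, toEuclideanCLM (𝕜 := ℝ)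
      (stepMat J α ^ k * SY * (stepMat J α ^ k)ᵀ) v⟫
      ≤ (1 - c * α) ^ k * ⟪v, toEuclideanCLM (𝕜 := ℝ) SY v⟫ := by
    intro k
    induction k with
    | zero => intro v; simp
    | succ k ih =>
      intro v
      have e : ⟪v, toEuclideanCLM (𝕜 := ℝ)
          (stepMat J α ^ (k + 1) * SY * (stepMat J α ^ (k + 1))ᵀ) v⟫
          = ⟪toEuclideanCLM (𝕜 := ℝ) (stepMat J α)ᵀ v, toEuclideanCLM (𝕜 := ℝ)
            (stepMat J α ^ k * SY * (stepMat J α ^ k)ᵀ)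
              (toEuclideanCLM (𝕜 := ℝ) (stepMat J α)ᵀ v)⟫ := by
        rw [inner_toEuclideanCLM_left, transpose_transpose, ← mul_apply_eq_comp,
          ← mul_apply_eq_comp, ← map_mul, ← map_mul, pow_succ', transpose_mul]
        simp only [mul_assoc]
      have e2 : ⟪toEuclideanCLM (𝕜 := ℝ) (stepMat J α)ᵀ v, toEuclideanCLM (𝕜 := ℝ) SY
              (toEuclideanCLM (𝕜 := ℝ) (stepMat J α)ᵀ v)⟫
          = ⟪v, toEuclideanCLM (𝕜 := ℝ) SY v⟫
            - ⟪v, toEuclideanCLM (𝕜 := ℝ) (noiseCov J S SY α) v⟫ := by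
        rw [inner_toEuclideanCLM_left, transpose_transpose, ← mul_apply_eq_comp,
          ← mul_apply_eq_comp, ← map_mul, ← map_mul, lyapunov_step hLyap, map_sub,
          _root_.sub_apply, inner_sub_right]
      rw [e]
      refine (ih _).trans ?_
      rw [e2, pow_succ, mul_assoc]
      have := hDlow v
      have h0 : 0 ≤ (1 - c * α) ^ k := pow_nonneg (by linarith) k
      gcongr
      linarith
  have hCt : ∀ k, (stepCov J SY α k)ᵀ = stepCov J SY α k := by
    intro k
    simp only [stepCov, transpose_sub, transpose_mul, transpose_transpose, hSYt, mul_assoc]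
  have hr0 : ∀ k, 0 ≤ (1 - c * α) ^ k := fun k => pow_nonneg (by linarith) k
  have hr1 : ∀ k, (1 - c * α) ^ k ≤ 1 := fun k =>
    pow_le_one₀ (by linarith) (by nlinarith)
  have hClow : ∀ k v, l * (1 - (1 - c * α) ^ k) * ‖v‖ ^ 2
      ≤ ⟪v, toEuclideanCLM (𝕜 := ℝ) (stepCov J SY α k) v⟫ := by
    intro k v
    rw [stepCov, map_sub, _root_.sub_apply, inner_sub_right]
    have := hpow k v
    have h1 := hl' v
    nlinarith [hr1 k]
  refine ⟨hα2, ?_, ?_, ?_, ?_, ?_⟩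
  · refine posSemidef_of_inner ?_ fun v => le_trans ?_ (hDlow v)
    · simp only [noiseCov, transpose_sub, transpose_smul, transpose_mul, transpose_transpose, hSYt,
        hSt, mul_assoc]
    · have := hSY0 v
      positivity
  · intro z
    rw [hD, hK2]
    have h1 := inner_le_opNorm S z
    have h2 := hJ0 z
    have h3 : 0 ≤ Λ / l := by positivity
    have h4 : 0 ≤ α ^ 2 * ⟪z, toEuclideanCLM (𝕜 := ℝ) (J * SY * Jᵀ) z⟫ := by positivity
    calc _ ≤ α * (ΛS * ‖z‖ ^ 2) := by nlinarith
      _ ≤ α * (ΛS + Λ / l) * ‖z‖ ^ 2 := by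
        rw [mul_assoc]
        gcongr
        linarith
  · intro k
    refine posSemidef_of_inner (hCt k) fun v => le_trans ?_ (hClow k v)
    have := hr1 k
    have : 0 ≤ 1 - (1 - c * α) ^ k := by linarith
    positivity
  · intro k
    refine posSemidef_of_inner (by simp [hCt k]) fun v => ?_
    rw [map_sub, map_smul, map_one, _root_.sub_apply, _root_.smul_apply, inner_sub_right,
      inner_smul_right, one_apply_eq_self, real_inner_self_eq_norm_sq]
    linarith [hClow k v]
  · intro k
    -- the Lyapunov function controls the transposed powers; the bound passes to the powers by duality
    have ht : ∀ v, ‖toEuclideanCLM (𝕜 := ℝ) (stepMat J α ^ k)ᵀ v‖ ^ 2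
        ≤ Λ / l * (1 - c * α) ^ k * ‖v‖ ^ 2 := by
      intro v
      have h1 := hl' (toEuclideanCLM (𝕜 := ℝ) (stepMat J α ^ k)ᵀ v)
      have e : ⟪toEuclideanCLM (𝕜 := ℝ) (stepMat J α ^ k)ᵀ v, toEuclideanCLM (𝕜 := ℝ) SY
              (toEuclideanCLM (𝕜 := ℝ) (stepMat J α ^ k)ᵀ v)⟫
          = ⟪v, toEuclideanCLM (𝕜 := ℝ) (stepMat J α ^ k * SY * (stepMat J α ^ k)ᵀ) v⟫ := by
        rw [inner_toEuclideanCLM_left, transpose_transpose, map_mul, map_mul]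
        rfl
      rw [e] at h1
      have h2 := (h1.trans (hpow k v)).trans (mul_le_mul_of_nonneg_left (hΛv v) (hr0 k))
      rw [div_mul_eq_mul_div, div_mul_eq_mul_div, le_div_iff₀ hl]
      linarith
    set R := √(Λ / l * (1 - c * α) ^ k) with hR
    have hR2 : R ^ 2 = Λ / l * (1 - c * α) ^ k :=
      Real.sq_sqrt (mul_nonneg (by positivity) (hr0 k))
    have hR0 : 0 ≤ R := Real.sqrt_nonneg _
    have ht' : ∀ v, ‖toEuclideanCLM (𝕜 := ℝ) (stepMat J α ^ k)ᵀ v‖ ≤ R * ‖v‖ := by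
      intro v
      refine le_of_sq_le_sq ?_ (by positivity)
      rw [mul_pow, hR2]
      exact ht v
    intro v
    have h5 : ‖toEuclideanCLM (𝕜 := ℝ) (stepMat J α ^ k) v‖ ≤ R * ‖v‖ := by
      set w := toEuclideanCLM (𝕜 := ℝ) (stepMat J α ^ k) v with hw
      have h6 : ‖w‖ ^ 2 ≤ ‖v‖ * (R * ‖w‖) := by
        rw [← real_inner_self_eq_norm_sq]
        nth_rewrite 1 [hw]
        rw [inner_toEuclideanCLM_left]
        refine (real_inner_le_norm _ _).trans ?_
        gcongr
        exact ht' w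
      rcases (norm_nonneg w).eq_or_lt with h0 | h0
      · rw [← h0]; positivity
      · nlinarith
    calc _ ≤ (R * ‖v‖) ^ 2 := by gcongr
      _ = Λ / l * (1 - c * α) ^ k * ‖v‖ ^ 2 := by rw [mul_pow, hR2]
      _ ≤ _ := by
        rw [hK2]
        have := hr0 k
        gcongr
        linarith

end LinearAlgebra

/-! ### Quadratic remainder of the drift -/

section Drift

variable {d : ℕ}

lemma norm_le_sum_abs (v : EuclideanSpace ℝ (Fin d)) : ‖v‖ ≤ ∑ i, |v i| := by
  have hu : v = ∑ i, v i • EuclideanSpace.single i (1 : ℝ) := by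
    have := (EuclideanSpace.basisFun (Fin d) ℝ).sum_repr v
    simpa using this.symm
  conv_lhs => rw [hu]
  refine (norm_sum_le _ _).trans (Finset.sum_le_sum fun i _ => ?_)
  simp [norm_smul]

lemma norm_bilin_le (q : EuclideanSpace ℝ (Fin d) →L[ℝ] EuclideanSpace ℝ (Fin d) →L[ℝ] ℝ) {M : ℝ}
    (hM : 0 ≤ M)
    (hq : ∀ j k, |q (EuclideanSpace.single j 1) (EuclideanSpace.single k 1)| ≤ M) :
    ‖q‖ ≤ (d : ℝ) ^ 2 * M := by
  have hu : ∀ v : EuclideanSpace ℝ (Fin d), v = ∑ i, v i • EuclideanSpace.single i (1 : ℝ) := by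
    intro v
    have := (EuclideanSpace.basisFun (Fin d) ℝ).sum_repr v
    simpa using this.symm
  refine q.opNorm_le_bound₂ (by positivity) fun x y => ?_
  have e : q x y = ∑ i, ∑ j, x i * (y j * q (EuclideanSpace.single i 1)
      (EuclideanSpace.single j 1)) := by
    conv_lhs => rw [hu x, hu y]
    simp only [map_sum, map_smul, _root_.sum_apply, _root_.smul_apply, smul_eq_mul,
      Finset.mul_sum]
    rw [Finset.sum_comm]
    refine Finset.sum_congr rfl fun i _ => Finset.sum_congr rfl fun j _ => ?_
    ring
  rw [e]
  calc _ ≤ ∑ i : Fin d, ∑ j : Fin d, ‖x‖ * (‖y‖ * M) := by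
        refine (norm_sum_le _ _).trans (Finset.sum_le_sum fun i _ => ?_)
        refine (norm_sum_le _ _).trans (Finset.sum_le_sum fun j _ => ?_)
        rw [norm_mul, norm_mul]
        gcongr
        · exact PiLp.norm_apply_le x i
        · exact PiLp.norm_apply_le y j
        · exact hq i j
    _ = _ := by
        simp
        ring

/-- Second order Taylor bound for a scalar function with bounded second partial derivatives. -/
lemma taylor_scalar {f : EuclideanSpace ℝ (Fin d) → ℝ} (hf : ContDiff ℝ 2 f) {M : ℝ} (hM0 : 0 ≤ M)
    (hM : ∀ x : EuclideanSpace ℝ (Fin d), ∀ j k : Fin d, |iteratedFDeriv ℝ 2 f x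
        ![EuclideanSpace.single j 1, EuclideanSpace.single k 1]| ≤ M)
    (x w : EuclideanSpace ℝ (Fin d)) :
    |f (x + w) - f x - fderiv ℝ f x w| ≤ (d : ℝ) ^ 2 * M * ‖w‖ ^ 2 := by
  have hf1 : ContDiff ℝ 1 (fderiv ℝ f) := hf.fderiv_right (by norm_num)
  have hq : ∀ z, ‖fderiv ℝ (fderiv ℝ f) z‖ ≤ (d : ℝ) ^ 2 * M := by
    intro z
    refine norm_bilin_le _ hM0 fun j k => ?_
    have := hM z j k
    rw [iteratedFDeriv_two_apply] at this
    simpa using this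
  have hL : ∀ z ∈ Metric.closedBall x ‖w‖, ‖fderiv ℝ f z - fderiv ℝ f x‖
      ≤ (d : ℝ) ^ 2 * M * ‖w‖ := by
    intro z hz
    refine (convex_univ.norm_image_sub_le_of_norm_fderiv_le (𝕜 := ℝ)
      (fun y _ => (hf1.differentiable (by norm_num)) y) (fun y _ => hq y)
      (Set.mem_univ x) (Set.mem_univ z)).trans ?_
    gcongr
    simpa [dist_eq_norm] using hz
  have := (convex_closedBall x ‖w‖).norm_image_sub_le_of_norm_fderiv_le' (𝕜 := ℝ)
    (fun y _ => (hf.differentiable (by norm_num)) y) hL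
    (Metric.mem_closedBall_self (norm_nonneg w)) (y := x + w) (by simp)
  rw [Real.norm_eq_abs, add_sub_cancel_left] at this
  refine this.trans (le_of_eq (by ring))

/-- The linearisation error of the drift at its root is quadratic. The absolute value of `M` makes
the bound meaningful in dimension zero, where `M` may be negative. -/
lemma drift_taylor {F : EuclideanSpace ℝ (Fin d) → EuclideanSpace ℝ (Fin d)} {M : ℝ}
    {xstar : EuclideanSpace ℝ (Fin d)} (hF : ContDiff ℝ 2 F) (hroot : F xstar = 0)
    (hM : ∀ x : EuclideanSpace ℝ (Fin d), ∀ i j k : Fin d,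
      |iteratedFDeriv ℝ 2 (fun y => F y i) x
        ![EuclideanSpace.single j 1, EuclideanSpace.single k 1]| ≤ M)
    {J : Matrix (Fin d) (Fin d) ℝ}
    (hJ : ∀ v, fderiv ℝ F xstar v = toEuclideanCLM (𝕜 := ℝ) J v) (w : EuclideanSpace ℝ (Fin d)) :
    ‖F (xstar + w) - toEuclideanCLM (𝕜 := ℝ) J w‖ ≤ (d : ℝ) ^ 3 * |M| * ‖w‖ ^ 2 := by
  refine (norm_le_sum_abs _).trans ?_
  calc _ ≤ ∑ i : Fin d, (d : ℝ) ^ 2 * |M| * ‖w‖ ^ 2 := Finset.sum_le_sum fun i _ => ?_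
    _ = _ := by
        simp
        ring
  have hfi : ContDiff ℝ 2 (fun y => F y i) := by
    exact (EuclideanSpace.proj (𝕜 := ℝ) i).contDiff.comp hF
  have hd : HasFDerivAt (fun y => F y i) ((EuclideanSpace.proj (𝕜 := ℝ) i).comp
      (fderiv ℝ F xstar)) xstar :=
    (EuclideanSpace.proj (𝕜 := ℝ) i).hasFDerivAt.comp xstar
      ((hF.differentiable (by norm_num)) xstar).hasFDerivAt
  have := taylor_scalar hfi (abs_nonneg M) (fun x j k => (hM x i j k).trans (le_abs_self M)) xstar w
  rw [hd.fderiv] at this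
  simpa [hroot, hJ] using this

end Drift

/-! ### One step of the nonlinear chain against one Gaussian step -/

section Comparison

variable {d : ℕ}

/-- One step of the nonlinear chain `y ↦ B y + r(y) + ξ` against one step of the linear Gaussian
chain `y ↦ B y + η`, both started from a law `π` invariant under the former. -/
lemma step_compare {π ρ₁ ρ₂ : Measure (EuclideanSpace ℝ (Fin d))} [IsProbabilityMeasure π]
    [IsProbabilityMeasure ρ₁] [IsProbabilityMeasure ρ₂]
    (hπ : Integrable (fun y => ‖y‖ ^ 3) π) (h₁ : Integrable (fun y => ‖y‖) ρ₁)
    (h₂ : Integrable (fun y => ‖y‖) ρ₂)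
    (T : EuclideanSpace ℝ (Fin d) →L[ℝ] EuclideanSpace ℝ (Fin d))
    {r : EuclideanSpace ℝ (Fin d) → EuclideanSpace ℝ (Fin d)} (hrm : Measurable r) {R : ℝ}
    (hr : ∀ y, ‖r y‖ ≤ R * ‖y‖ ^ 2)
    (hinv : (π.prod ρ₁).map (fun p => T p.1 + r p.1 + p.2) = π)
    {g : EuclideanSpace ℝ (Fin d) → ℝ} {K : ℝ≥0} (hg : LipschitzWith K g) {δ : ℝ}
    (hδ : ∀ x, |∫ ξ, g (x + ξ) ∂ρ₁ - ∫ η, g (x + η) ∂ρ₂| ≤ δ) :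
    |∫ y, g y ∂π - ∫ y, ∫ η, g (T y + η) ∂ρ₂ ∂π| ≤ K * R * ∫ y, ‖y‖ ^ 2 ∂π + δ := by
  obtain ⟨hπ1, hπ2⟩ := integrable_norm_of_cube hπ
  have hmeas : Measurable (fun p : EuclideanSpace ℝ (Fin d) × EuclideanSpace ℝ (Fin d) =>
      T p.1 + r p.1 + p.2) := by fun_prop
  have hgi : Integrable g π := integrable_of_lipschitz hπ1 hg
  have hgp : Integrable (fun p : EuclideanSpace ℝ (Fin d) × EuclideanSpace ℝ (Fin d) =>
      g (T p.1 + r p.1 + p.2)) (π.prod ρ₁) := by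
    rw [← hinv] at hgi
    exact hgi.comp_measurable hmeas
  have e1 : ∫ y, g y ∂π = ∫ y, ∫ ξ, g (T y + r y + ξ) ∂ρ₁ ∂π := by
    conv_lhs => rw [← hinv]
    rw [integral_map hmeas.aemeasurable hg.continuous.aestronglyMeasurable, integral_prod _ hgp]
  have l₁ := lipschitz_average h₁ hg
  have l₂ := lipschitz_average h₂ hg
  have i₂ : Integrable (fun y => ∫ η, g (T y + η) ∂ρ₂) π := by
    have := l₂.comp T.lipschitz
    exact integrable_of_lipschitz hπ1 this
  rw [e1, ← integral_sub hgp.integral_prod_left i₂, ← integral_const_mul, ← Real.norm_eq_abs]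
  have hc : δ = ∫ _, δ ∂π := by simp
  rw [hc, ← integral_add (hπ2.const_mul _) (integrable_const _)]
  refine norm_integral_le_of_norm_le ((hπ2.const_mul _).add (integrable_const _))
    (Filter.Eventually.of_forall fun y => ?_)
  have b1 := l₁.dist_le_mul (T y + r y) (T y)
  rw [Real.dist_eq, dist_eq_norm, add_sub_cancel_left] at b1
  have b2 := hδ (T y)
  have b3 : (K : ℝ) * ‖r y‖ ≤ K * (R * ‖y‖ ^ 2) := by
    gcongr
    exact hr y
  rw [Real.norm_eq_abs]
  rw [abs_le] at *
  constructor <;> linarith [b1.1, b1.2, b2.1, b2.2]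

lemma integral_norm_le_of_cube {ρ : Measure (EuclideanSpace ℝ (Fin d))} [IsProbabilityMeasure ρ]
    (h3 : Integrable (fun x => ‖x‖ ^ 3) ρ) {s m : ℝ} (hs : 0 < s)
    (hm : ∫ x, ‖x‖ ^ 3 ∂ρ ≤ m * s ^ 3) : ∫ x, ‖x‖ ∂ρ ≤ s * (1 + m) := by
  have hp : ∀ x : EuclideanSpace ℝ (Fin d), ‖x‖ ≤ s + (s ^ 2)⁻¹ * ‖x‖ ^ 3 := by
    intro x
    have hx := norm_nonneg x
    rcases le_total ‖x‖ s with h | h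
    · have : 0 ≤ (s ^ 2)⁻¹ * ‖x‖ ^ 3 := by positivity
      linarith
    · have : ‖x‖ ≤ (s ^ 2)⁻¹ * ‖x‖ ^ 3 := by
        rw [inv_mul_eq_div, le_div_iff₀ (by positivity)]
        have : s ^ 2 ≤ ‖x‖ ^ 2 := by gcongr
        nlinarith
      linarith
  calc _ ≤ ∫ x, (s + (s ^ 2)⁻¹ * ‖x‖ ^ 3) ∂ρ :=
        integral_mono (integrable_norm_of_cube h3).1
          ((integrable_const _).add (h3.const_mul _)) hp
    _ = s + (s ^ 2)⁻¹ * ∫ x, ‖x‖ ^ 3 ∂ρ := by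
        rw [integral_add (integrable_const _) (h3.const_mul _), integral_const_mul]
        simp
    _ ≤ s + (s ^ 2)⁻¹ * (m * s ^ 3) := by gcongr
    _ = _ := by field_simp

lemma lipschitz_integral_sub {ρ : Measure (EuclideanSpace ℝ (Fin d))} [IsProbabilityMeasure ρ]
    (h1 : Integrable (fun x => ‖x‖) ρ) {g : EuclideanSpace ℝ (Fin d) → ℝ} {K : ℝ≥0}
    (hg : LipschitzWith K g) : |∫ x, g x ∂ρ - g 0| ≤ K * ∫ x, ‖x‖ ∂ρ := by
  have e : ∫ x, g x ∂ρ - g 0 = ∫ x, (g x - g 0) ∂ρ := by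
    rw [integral_sub (integrable_of_lipschitz h1 hg) (integrable_const _)]
    simp
  rw [e, ← integral_const_mul, ← Real.norm_eq_abs]
  refine norm_integral_le_of_norm_le (h1.const_mul _) (Filter.Eventually.of_forall fun x => ?_)
  have := hg.dist_le_mul x 0
  simpa [Real.dist_eq] using this

lemma lipschitz_translate {g : EuclideanSpace ℝ (Fin d) → ℝ} {K : ℝ≥0} (hg : LipschitzWith K g)
    (x : EuclideanSpace ℝ (Fin d)) : LipschitzWith K (fun ξ => g (x + ξ)) := by
  refine LipschitzWith.of_dist_le_mul fun y z => ?_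
  simpa using hg.dist_le_mul (x + y) (x + z)

/-- Without smoothing, the change of noise costs `O(√α)` (here `s = √α`). -/
lemma step_zero {ρ₁ ρ₂ : Measure (EuclideanSpace ℝ (Fin d))} [IsProbabilityMeasure ρ₁]
    [IsProbabilityMeasure ρ₂] (h3₁ : Integrable (fun x => ‖x‖ ^ 3) ρ₁)
    (h3₂ : Integrable (fun x => ‖x‖ ^ 3) ρ₂) {s m : ℝ} (hs : 0 < s)
    (hm₁ : ∫ x, ‖x‖ ^ 3 ∂ρ₁ ≤ m * s ^ 3) (hm₂ : ∫ x, ‖x‖ ^ 3 ∂ρ₂ ≤ m * s ^ 3)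
    {h : EuclideanSpace ℝ (Fin d) → ℝ} (hh : LipschitzWith 1 h) (x : EuclideanSpace ℝ (Fin d)) :
    |∫ ξ, h (x + ξ) ∂ρ₁ - ∫ η, h (x + η) ∂ρ₂| ≤ 2 * (s * (1 + m)) := by
  have b₁ := lipschitz_integral_sub (integrable_norm_of_cube h3₁).1 (lipschitz_translate hh x)
  have b₂ := lipschitz_integral_sub (integrable_norm_of_cube h3₂).1 (lipschitz_translate hh x)
  have c₁ := integral_norm_le_of_cube h3₁ hs hm₁
  have c₂ := integral_norm_le_of_cube h3₂ hs hm₂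
  simp only [NNReal.coe_one, one_mul] at b₁ b₂
  rw [abs_le] at *
  constructor <;> linarith [b₁.1, b₁.2, b₂.1, b₂.2]

/-- With the smoothing provided by `k ≥ 1` Gaussian steps, the change of noise costs
`O(α^{3/2} (1 + 1 / (α k)))` (here `s = √α`). -/
lemma step_pos {ρ₁ ρ₂ : Measure (EuclideanSpace ℝ (Fin d))} [IsProbabilityMeasure ρ₁]
    [IsProbabilityMeasure ρ₂] (hmean₁ : ∫ x, x ∂ρ₁ = 0) (hmean₂ : ∫ x, x ∂ρ₂ = 0)
    {V₁ V₂ : Matrix (Fin d) (Fin d) ℝ}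
    (hcov₁ : ∀ i j, ∫ x, x i * x j ∂ρ₁ = V₁ i j) (hcov₂ : ∀ i j, ∫ x, x i * x j ∂ρ₂ = V₂ i j)
    (h3₁ : Integrable (fun x => ‖x‖ ^ 3) ρ₁) (h3₂ : Integrable (fun x => ‖x‖ ^ 3) ρ₂)
    {s m b : ℝ} (hs : 0 < s) (hs1 : s ≤ 1) (hm : 0 ≤ m)
    (hm₁ : ∫ x, ‖x‖ ^ 3 ∂ρ₁ ≤ m * s ^ 3) (hm₂ : ∫ x, ‖x‖ ^ 3 ∂ρ₂ ≤ m * s ^ 3)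
    (hb : ∑ i, ∑ j, |V₁ i j - V₂ i j| ≤ b * s ^ 4)
    {h : EuclideanSpace ℝ (Fin d) → ℝ} (hh : LipschitzWith 1 h)
    {C V : Matrix (Fin d) (Fin d) ℝ} {l c κ t : ℝ} (hl : 0 < l) (hc : 0 < c) (hκ : 0 ≤ κ)
    (ht : 0 < t)
    (hC : (C - (l * (c * t / (1 + c * t))) • (1 : Matrix (Fin d) (Fin d) ℝ)).PosSemidef)
    (hV : ∀ y, ‖toEuclideanCLM (𝕜 := ℝ) V y‖ ≤ κ * ‖y‖) (x : EuclideanSpace ℝ (Fin d)) :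
    |∫ ξ, ∫ w, h (toEuclideanCLM (𝕜 := ℝ) V (x + ξ) + w) ∂(gauss C) ∂ρ₁
        - ∫ η, ∫ w, h (toEuclideanCLM (𝕜 := ℝ) V (x + η) + w) ∂(gauss C) ∂ρ₂|
      ≤ smoothConst (EuclideanSpace ℝ (Fin d)) * (2 * m * κ ^ 3 * ((1 + 1 / c) / l)
          + κ ^ 2 * b * (1 + (1 + 1 / c) / l)) * (s ^ 3 * (1 + 1 / t)) := by
  set K₀ := smoothConst (EuclideanSpace ℝ (Fin d)) with hK₀
  have hK₀0 : 0 ≤ K₀ := smoothConst_nonneg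
  set σ := √(l * (c * t / (1 + c * t))) with hσ
  have hσ0 : 0 < σ := Real.sqrt_pos.2 (by positivity)
  have hσ2 : σ ^ 2 = l * (c * t / (1 + c * t)) := Real.sq_sqrt (by positivity)
  rw [← hσ2] at hC
  obtain ⟨ℓ, q, h1, h2⟩ := exists_expansion_gauss h hh hσ0 hκ hC hV x
  have hlip : LipschitzWith (‖toEuclideanCLM (𝕜 := ℝ) V‖₊)
      (fun u => ∫ w, h (toEuclideanCLM (𝕜 := ℝ) V (x + u) + w) ∂(gauss C)) := by
    have := (lipschitz_average (integrable_norm_gauss C) hh).comp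
      ((toEuclideanCLM (𝕜 := ℝ) V).lipschitz)
    rw [one_mul] at this
    refine LipschitzWith.of_dist_le_mul fun y z => ?_
    simpa using this.dist_le_mul (x + y) (x + z)
  have hb0 : 0 ≤ b := by
    have h0 : 0 ≤ ∑ i, ∑ j, |V₁ i j - V₂ i j| :=
      Finset.sum_nonneg fun i _ => Finset.sum_nonneg fun j _ => abs_nonneg _
    have hs4 : 0 < s ^ 4 := by positivity
    by_contra hneg
    nlinarith
  have key := lindeberg hmean₁ hmean₂ hcov₁ hcov₂ h3₁ h3₂
    (integrable_of_lipschitz (integrable_norm_of_cube h3₁).1 hlip)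
    (integrable_of_lipschitz (integrable_norm_of_cube h3₂).1 hlip) ℓ q
    (K := K₀ * κ ^ 3 / σ ^ 2) (κ := K₀ * κ ^ 2 / σ)
    (by simpa using h1) h2
  have hinv2 : 1 / σ ^ 2 ≤ (1 + 1 / c) / l * (1 + 1 / t) := by
    have e : 1 / σ ^ 2 = (1 + 1 / (c * t)) / l := by
      rw [hσ2]
      field_simp
      ring
    rw [e, div_mul_eq_mul_div]
    gcongr
    have e2 : (1 + 1 / c) * (1 + 1 / t) = 1 + 1 / (c * t) + (1 / c + 1 / t) := by
      field_simp
      ring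
    rw [e2]
    have : 0 ≤ 1 / c + 1 / t := by positivity
    linarith
  set P := (1 + 1 / c) / l with hP
  have hP0 : 0 ≤ P := by positivity
  set Q := 1 + 1 / t with hQ
  have hQ1 : 1 ≤ Q := by
    have : 0 ≤ 1 / t := by positivity
    linarith
  have hinv1 : 1 / σ ≤ (1 + P) * Q := by
    have e : 1 / σ ≤ 1 + 1 / σ ^ 2 := by
      have : 1 / σ ^ 2 = (1 / σ) ^ 2 := by rw [div_pow, one_pow]
      rw [this]
      nlinarith [sq_nonneg (1 / σ - 1), sq_nonneg (1 / σ)]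
    nlinarith
  have hs43 : s ^ 4 ≤ s ^ 3 := pow_le_pow_of_le_one hs.le hs1 (by norm_num)
  refine key.trans ?_
  calc _ ≤ K₀ * κ ^ 3 / σ ^ 2 * (m * s ^ 3 + m * s ^ 3) + K₀ * κ ^ 2 / σ * (b * s ^ 3) := by
        gcongr
        exact hb.trans (by gcongr)
    _ = K₀ * κ ^ 3 * (2 * m * s ^ 3) * (1 / σ ^ 2) + K₀ * κ ^ 2 * (b * s ^ 3) * (1 / σ) := by
        ring
    _ ≤ K₀ * κ ^ 3 * (2 * m * s ^ 3) * (P * Q) + K₀ * κ ^ 2 * (b * s ^ 3) * ((1 + P) * Q) := by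
        gcongr
    _ = _ := by ring

/-- The `k`-step average of `h` along the linear Gaussian chain. -/
noncomputable def chainAvg (J SY : Matrix (Fin d) (Fin d) ℝ) (α : ℝ)
    (h : EuclideanSpace ℝ (Fin d) → ℝ) (k : ℕ) (y : EuclideanSpace ℝ (Fin d)) : ℝ :=
  ∫ w, h (toEuclideanCLM (𝕜 := ℝ) (stepMat J α ^ k) y + w) ∂(gauss (stepCov J SY α k))

lemma chainAvg_zero (J SY : Matrix (Fin d) (Fin d) ℝ) (α : ℝ)
    (h : EuclideanSpace ℝ (Fin d) → ℝ) : chainAvg J SY α h 0 = h := by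
  ext y
  have : gauss (0 : Matrix (Fin d) (Fin d) ℝ) = Measure.dirac 0 := by
    apply Measure.ext_of_charFun
    ext t
    rw [charFun_gauss PosSemidef.zero]
    simp
  simp [chainAvg, stepCov, this]

/-- The averages satisfy the backward equation of the linear Gaussian chain. -/
lemma chainAvg_succ {J S SY : Matrix (Fin d) (Fin d) ℝ} (hLyap : J * SY + SY * Jᵀ = -S) {α : ℝ}
    (hD : (noiseCov J S SY α).PosSemidef) {k : ℕ} (hC : (stepCov J SY α k).PosSemidef)
    {h : EuclideanSpace ℝ (Fin d) → ℝ} {K : ℝ≥0} (hh : LipschitzWith K h)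
    (y : EuclideanSpace ℝ (Fin d)) :
    chainAvg J SY α h (k + 1) y
      = ∫ η, chainAvg J SY α h k (toEuclideanCLM (𝕜 := ℝ) (stepMat J α) y + η)
          ∂(gauss (noiseCov J S SY α)) := by
  have e : stepCov J SY α (k + 1) = stepMat J α ^ k * noiseCov J S SY α * (stepMat J α ^ k)ᵀ
      + stepCov J SY α k := by
    have e1 : stepMat J α ^ (k + 1) * SY * (stepMat J α ^ (k + 1))ᵀ
        = stepMat J α ^ k * (stepMat J α * SY * (stepMat J α)ᵀ) * (stepMat J α ^ k)ᵀ := by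
      rw [pow_succ, transpose_mul]
      simp only [mul_assoc]
    rw [stepCov, e1, lyapunov_step hLyap, mul_sub, sub_mul, stepCov]
    abel
  simp only [chainAvg]
  rw [e, integral_gauss_comp _ hD hC (lipschitz_translate hh _)]
  simp only [map_add, pow_succ, map_mul, mul_apply_eq_comp, add_assoc]

lemma chainAvg_invariant {J SY : Matrix (Fin d) (Fin d) ℝ} (hSY : SY.PosSemidef) {α : ℝ}
    {k : ℕ} (hC : (stepCov J SY α k).PosSemidef)
    {h : EuclideanSpace ℝ (Fin d) → ℝ} {K : ℝ≥0} (hh : LipschitzWith K h) :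
    ∫ y, chainAvg J SY α h k y ∂(gauss SY) = ∫ y, h y ∂(gauss SY) := by
  have e : SY = stepMat J α ^ k * SY * (stepMat J α ^ k)ᵀ + stepCov J SY α k := by
    rw [stepCov]; abel
  conv_rhs => rw [e]
  rw [integral_gauss_comp _ hSY hC hh]
  rfl

lemma chainAvg_lipschitz {J SY : Matrix (Fin d) (Fin d) ℝ} {α : ℝ} {k : ℕ}
    {h : EuclideanSpace ℝ (Fin d) → ℝ} (hh : LipschitzWith 1 h) {κ : ℝ≥0}
    (hκ : ∀ v, ‖toEuclideanCLM (𝕜 := ℝ) (stepMat J α ^ k) v‖ ≤ κ * ‖v‖) :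
    LipschitzWith κ (chainAvg J SY α h k) := by
  have l := lipschitz_average (integrable_norm_gauss (stepCov J SY α k)) hh
  refine LipschitzWith.of_dist_le_mul fun x y => ?_
  refine (l.dist_le_mul _ _).trans ?_
  rw [NNReal.coe_one, one_mul, dist_eq_norm, ← map_sub, dist_eq_norm]
  exact hκ _

end Comparison

/-! ### Summing the errors over logarithmic time -/

section Summation

/-- Bernoulli-type lower bound turning `1 - (1 - cα) ^ k` into a quantity comparable with
`min (cαk) 1`. -/
lemma one_sub_pow_le {x : ℝ} (hx0 : 0 ≤ x) (hx1 : x ≤ 1) (k : ℕ) :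
    x * k / (1 + x * k) ≤ 1 - (1 - x) ^ k := by
  have h1 : 1 + k * x ≤ (1 + x) ^ k := one_add_mul_le_pow (by linarith) k
  have h2 : (1 - x) ^ k * (1 + x) ^ k ≤ 1 := by
    rw [← mul_pow]
    exact pow_le_one₀ (by nlinarith) (by nlinarith)
  have h3 : 0 ≤ (1 - x) ^ k := pow_nonneg (by linarith) k
  have h4 : 0 < 1 + x * k := by positivity
  rw [div_le_iff₀ h4]
  nlinarith [mul_le_mul_of_nonneg_left h1 h3]

/-- The number of steps is `n ≈ log (1 / α) / (cα)`: the linear chain contracts by `√α`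
(squared: `α`) in that time, while the sum of the smoothed one-step errors, a harmonic sum, stays
`O(log (1 / α))`. -/
lemma sum_step_le {α c : ℝ} (hα : 0 < α) (hα1 : α ≤ 1) (hc : 0 < c) (hl : 1 ≤ Real.log (1 / α)) :
    ∃ n : ℕ, (n : ℝ) * α ≤ (1 / c + 1) * Real.log (1 / α) ∧
      Real.exp (-(c * α * n)) ≤ α ∧
      ∑ k ∈ Finset.range n, α * (1 + 1 / (α * ((k + 1 : ℕ) : ℝ)))
        ≤ (4 + 2 / c) * Real.log (1 / α) := by
  set ℓ := Real.log (1 / α) with hℓ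
  have hℓα : ℓ ≤ 1 / α := (Real.log_le_sub_one_of_pos (by positivity)).trans (by linarith)
  set n := ⌈ℓ / (c * α)⌉₊ with hn
  have hn1 : ℓ / (c * α) ≤ n := Nat.le_ceil _
  have hn2 : (n : ℝ) ≤ ℓ / (c * α) + 1 := (Nat.ceil_lt_add_one (by positivity)).le
  have hn3 : (n : ℝ) * α ≤ (1 / c + 1) * ℓ := by
    calc (n : ℝ) * α ≤ (ℓ / (c * α) + 1) * α := by gcongr
      _ = ℓ / c + α := by field_simp
      _ ≤ ℓ / c + ℓ := by linarith
      _ = _ := by ring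
  refine ⟨n, hn3, ?_, ?_⟩
  · have h1 : ℓ ≤ c * α * n := by
      rw [div_le_iff₀ (by positivity)] at hn1
      linarith
    calc Real.exp (-(c * α * n)) ≤ Real.exp (-ℓ) := Real.exp_le_exp.2 (by linarith)
      _ = α := by
        rw [hℓ, one_div, Real.log_inv, neg_neg, Real.exp_log hα]
  · have hn0 : 0 < n := Nat.ceil_pos.2 (by positivity)
    have hlog : Real.log n ≤ 1 / c + 2 * ℓ := by
      have h1 : (n : ℝ) ≤ (1 + 1 / c) * (1 / α) ^ 2 := by
        have ha : 1 ≤ 1 / α := by rw [le_div_iff₀ hα]; linarith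
        calc (n : ℝ) ≤ ℓ / (c * α) + 1 := hn2
          _ = 1 / c * (ℓ * (1 / α)) + 1 := by field_simp
          _ ≤ 1 / c * (1 / α * (1 / α)) + (1 / α) ^ 2 := by
            gcongr
            exact one_le_pow₀ ha
          _ = _ := by ring
      calc Real.log n ≤ Real.log ((1 + 1 / c) * (1 / α) ^ 2) :=
            Real.log_le_log (by exact_mod_cast hn0) h1
        _ = Real.log (1 + 1 / c) + 2 * ℓ := by
            rw [Real.log_mul (by positivity) (by positivity), Real.log_pow]
            simp [hℓ]
        _ ≤ 1 / c + 2 * ℓ := by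
            have := Real.log_le_sub_one_of_pos (x := 1 + 1 / c) (by positivity)
            linarith
    have hharm : ∑ k ∈ Finset.range n, 1 / ((k + 1 : ℕ) : ℝ) ≤ 1 + Real.log n := by
      have := harmonic_le_one_add_log n
      rw [harmonic] at this
      push_cast at this ⊢
      simpa using this
    calc _ = n * α + ∑ k ∈ Finset.range n, 1 / ((k + 1 : ℕ) : ℝ) := by
          have : ∀ k ∈ Finset.range n, α * (1 + 1 / (α * ((k + 1 : ℕ) : ℝ)))
              = α + 1 / ((k + 1 : ℕ) : ℝ) := fun k _ => by
            field_simp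
          rw [Finset.sum_congr rfl this, Finset.sum_add_distrib]
          simp
      _ ≤ (1 / c + 1) * ℓ + (1 + (1 / c + 2 * ℓ)) := by gcongr; linarith
      _ ≤ _ := by
        have : 0 < 1 / c := by positivity
        have e : (4 + 2 / c) * ℓ = (1 / c + 1) * ℓ + (ℓ + (1 / c * ℓ + 2 * ℓ)) := by ring
        rw [e]
        gcongr
        nlinarith

end Summation

/-! ### The quantitative comparison of invariant laws -/

section Assembly

variable {d : ℕ}

set_option maxHeartbeats 2000000 in
/-- The quantitative comparison, for laws `π` invariant under `y ↦ (1 + αJ) y + r(y) + ξ` with a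
quadratic remainder `r = O(α^{3/2} ‖y‖²)`. The constants depend only on the listed data. -/
lemma invariant_law_bound {J S SY : Matrix (Fin d) (Fin d) ℝ} (hS : S.PosDef)
    (hSY : SY.PosDef) (hLyap : J * SY + SY * Jᵀ = -S) {A m₁ R : ℝ} (hA : 0 ≤ A) (hm₁ : 0 ≤ m₁)
    (hR : 0 ≤ R) :
    ∃ a ∈ Set.Ioc (0 : ℝ) 1, ∃ U : ℝ, ∀ α ∈ Set.Ioo (0 : ℝ) a,
      ∀ (π ρ : Measure (EuclideanSpace ℝ (Fin d))) [IsProbabilityMeasure π]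
        [IsProbabilityMeasure ρ] (r : EuclideanSpace ℝ (Fin d) → EuclideanSpace ℝ (Fin d)),
      Integrable (fun y => ‖y‖ ^ 3) π → ∫ y, ‖y‖ ^ 3 ∂π ≤ A →
      Integrable (fun y => ‖y‖ ^ 3) ρ → ∫ y, ‖y‖ ^ 3 ∂ρ ≤ m₁ * √α ^ 3 →
      ∫ x, x ∂ρ = 0 → (∀ i j, ∫ x, x i * x j ∂ρ = (α • S) i j) →
      Measurable r → (∀ y, ‖r y‖ ≤ R * √α ^ 3 * ‖y‖ ^ 2) →
      (π.prod ρ).map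
        (fun p => toEuclideanCLM (𝕜 := ℝ) (stepMat J α) p.1 + r p.1 + p.2) = π →
      ∀ h : EuclideanSpace ℝ (Fin d) → ℝ, LipschitzWith 1 h →
        |∫ y, h y ∂π - ∫ y, h y ∂(gauss SY)| ≤ U * (√α * Real.log (1 / α)) := by
  obtain ⟨a, ⟨ha0, ha1⟩, c, hc, l, hl, K, hK, hlin⟩ := exists_linear_constants hS hSY hLyap
  set G := ∫ y, ‖y‖ ∂(gauss SY) with hG
  have hG0 : 0 ≤ G := integral_nonneg fun y => norm_nonneg y
  set m := m₁ + K ^ 3 * stdThird d with hm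
  have hst : 0 ≤ stdThird d := stdThird_nonneg
  have hm0 : 0 ≤ m := by positivity
  set b := ∑ i, ∑ j, |(J * SY * Jᵀ) i j| with hb
  have hb0 : 0 ≤ b := Finset.sum_nonneg fun i _ => Finset.sum_nonneg fun j _ => abs_nonneg _
  set H := smoothConst (EuclideanSpace ℝ (Fin d)) * (2 * m * K ^ 3 * ((1 + 1 / c) / l)
          + K ^ 2 * b * (1 + (1 + 1 / c) / l)) with hH
  have hH0 : 0 ≤ H := by
    have := smoothConst_nonneg (E := EuclideanSpace ℝ (Fin d))
    positivity
  set W := K * R * (1 + A) with hW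
  have hW0 : 0 ≤ W := by positivity
  -- `α ≤ exp (-1)` makes `log (1 / α) ≥ 1`, so that constants are absorbed by the logarithm
  refine ⟨min a (Real.exp (-1)), ⟨by positivity, (min_le_left _ _).trans ha1⟩,
    2 * (1 + m) + H * (4 + 2 / c) + W * (1 / c + 2) + K * ((1 + A) + G), ?_⟩
  rintro α ⟨hα0, hαa⟩ π ρ _ _ r hπ hπA hρ hρm hρ0 hρcov hrm hr hinv h hh
  have hαa' : α < a := hαa.trans_le (min_le_left _ _)
  have hα1 : α ≤ 1 := hαa'.le.trans ha1
  have hℓ1 : 1 ≤ Real.log (1 / α) := by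
    have h1 : Real.log α ≤ -1 := by
      have := Real.log_le_log hα0 (hαa.le.trans (min_le_right _ _))
      rwa [Real.log_exp] at this
    rw [one_div, Real.log_inv]
    linarith
  obtain ⟨hcα, hD, hDup, hCk, hCklow, hBk⟩ := hlin α ⟨hα0, hαa'⟩
  obtain ⟨n, hn1, hn2, hn3⟩ := sum_step_le hα0 hα1 hc hℓ1
  set ℓ := Real.log (1 / α) with hℓ
  set s := √α with hs
  have hs0 : 0 < s := Real.sqrt_pos.2 hα0
  have hs2 : s ^ 2 = α := Real.sq_sqrt hα0.le
  have hs1 : s ≤ 1 := by rw [hs]; exact Real.sqrt_le_one.2 hα1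
  have hs3 : s ^ 3 = s * α := by rw [← hs2]; ring
  have hs4 : s ^ 4 = α ^ 2 := by rw [← hs2]; ring
  obtain ⟨hπ1, hπ2⟩ := integrable_norm_of_cube hπ
  have hE1 : ∫ y, ‖y‖ ∂π ≤ 1 + A := by
    calc _ ≤ 1 * (1 + A) := integral_norm_le_of_cube hπ one_pos (by simpa using hπA)
      _ = _ := one_mul _
  have hE2 : ∫ y, ‖y‖ ^ 2 ∂π ≤ 1 + A := by
    calc _ ≤ ∫ y, (1 + ‖y‖ ^ 3) ∂π := by
          refine integral_mono hπ2 ((integrable_const _).add hπ) fun y => ?_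
          have := norm_nonneg y
          simp only
          nlinarith [sq_nonneg (‖y‖ - 1), mul_nonneg this (sq_nonneg (‖y‖ - 1))]
      _ = 1 + ∫ y, ‖y‖ ^ 3 ∂π := by
          rw [integral_add (integrable_const _) hπ]
          simp
      _ ≤ _ := by linarith
  have hηi : Integrable (fun x => ‖x‖ ^ 3) (gauss (noiseCov J S SY α)) :=
    integrable_norm_pow_gauss _ 3
  have hηm : ∫ x, ‖x‖ ^ 3 ∂(gauss (noiseCov J S SY α)) ≤ m * s ^ 3 := by
    have := third_moment_gauss hD (b := s * K) (by positivity) (fun z => by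
      rw [mul_pow, hs2]; exact hDup z)
    refine this.trans ?_
    calc (s * K) ^ 3 * stdThird d = K ^ 3 * stdThird d * s ^ 3 := by ring
      _ ≤ _ := by gcongr; linarith
  have hρm' : ∫ x, ‖x‖ ^ 3 ∂ρ ≤ m * s ^ 3 := by
    refine hρm.trans ?_
    gcongr
    have : 0 ≤ K ^ 3 * stdThird d := by positivity
    linarith
  have hη0 : ∫ x, x ∂(gauss (noiseCov J S SY α)) = 0 := integral_id_multivariateGaussian
  have hcovb : ∑ i, ∑ j, |(α • S) i j - noiseCov J S SY α i j| ≤ b * s ^ 4 := by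
    rw [hb, hs4, Finset.sum_mul]
    refine Finset.sum_le_sum fun i _ => ?_
    rw [Finset.sum_mul]
    refine Finset.sum_le_sum fun j _ => ?_
    simp only [noiseCov, Matrix.sub_apply, Matrix.smul_apply, smul_eq_mul, sub_sub_cancel, abs_mul]
    rw [abs_of_nonneg (sq_nonneg α), mul_comm]
  have hr0 : ∀ k, 0 ≤ (1 - c * α) ^ k := fun k => pow_nonneg (by linarith) k
  have hBK : ∀ k v, ‖toEuclideanCLM (𝕜 := ℝ) (stepMat J α ^ k) v‖ ≤ K * ‖v‖ := by
    intro k v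
    refine le_of_sq_le_sq ((hBk k v).trans ?_) (by positivity)
    rw [mul_pow]
    have h1 : (1 - c * α) ^ k ≤ 1 :=
      pow_le_one₀ (by linarith) (by nlinarith)
    gcongr
    nlinarith [sq_nonneg K]
  have hlipK : ∀ k, LipschitzWith K.toNNReal (chainAvg J SY α h k) := fun k =>
    chainAvg_lipschitz hh (by rw [Real.coe_toNNReal K hK]; exact hBK k)
  have hstep : ∀ k δ, (∀ x, |∫ ξ, chainAvg J SY α h k (x + ξ) ∂ρ
        - ∫ η, chainAvg J SY α h k (x + η) ∂(gauss (noiseCov J S SY α))| ≤ δ) →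
      dist (∫ y, chainAvg J SY α h k y ∂π) (∫ y, chainAvg J SY α h (k + 1) y ∂π)
        ≤ δ + W * s ^ 3 := by
    intro k δ hδ
    have := step_compare hπ (integrable_norm_of_cube hρ).1 (integrable_norm_of_cube hηi).1
      (toEuclideanCLM (𝕜 := ℝ) (stepMat J α)) hrm hr hinv (hlipK k) hδ
    rw [Real.coe_toNNReal K hK] at this
    rw [Real.dist_eq]
    simp_rw [chainAvg_succ hLyap hD (hCk k) hh]
    refine this.trans ?_
    have h1 : K * (R * s ^ 3) * ∫ y, ‖y‖ ^ 2 ∂π ≤ K * (R * s ^ 3) * (1 + A) := by gcongr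
    have h2 : W * s ^ 3 = K * (R * s ^ 3) * (1 + A) := by rw [hW]; ring
    rw [h2]
    linarith
  have hstep0 := hstep 0 (2 * (s * (1 + m))) (fun x => by
    simp only [chainAvg_zero]
    exact step_zero hρ hηi hs0 hρm' hηm hh x)
  have hstepk : ∀ k : ℕ, dist (∫ y, chainAvg J SY α h (k + 1) y ∂π)
      (∫ y, chainAvg J SY α h (k + 1 + 1) y ∂π)
      ≤ H * (s ^ 3 * (1 + 1 / (α * ((k + 1 : ℕ) : ℝ)))) + W * s ^ 3 := by
    intro k
    refine hstep (k + 1) _ fun x => ?_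
    have hlow : (stepCov J SY α (k + 1) - (l * (c * (α * ((k + 1 : ℕ) : ℝ))
        / (1 + c * (α * ((k + 1 : ℕ) : ℝ))))) • (1 : Matrix (Fin d) (Fin d) ℝ)).PosSemidef := by
      have h1 := one_sub_pow_le (x := c * α) (by positivity) hcα.le (k + 1)
      rw [mul_assoc] at h1
      have h2 : 0 ≤ l * (1 - (1 - c * α) ^ (k + 1)) - l * (c * (α * ((k + 1 : ℕ) : ℝ))
        / (1 + c * (α * ((k + 1 : ℕ) : ℝ)))) := by
        rw [← mul_sub]
        exact mul_nonneg hl.le (by linarith)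
      have h3 := (hCklow (k + 1)).add ((PosSemidef.one (n := Fin d) (R := ℝ)).smul h2)
      convert h3 using 1
      module
    exact step_pos hρ0 hη0 hρcov (second_moment_gauss hD) hρ hηi hs0 hs1 hm0 hρm' hηm hcovb hh
      hl hc hK (by positivity) hlow (hBK (k + 1)) x
  -- the unsmoothed step `k = 0` costs `O(√α)`, the others sum to `O(√α ℓ)`
  have htel : dist (∫ y, h y ∂π) (∫ y, chainAvg J SY α h (n + 1) y ∂π)
      ≤ (2 * (1 + m) + H * (4 + 2 / c) + W * (1 / c + 2)) * (s * ℓ) := by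
    have h1 := dist_le_range_sum_dist (fun k => ∫ y, chainAvg J SY α h k y ∂π) (n + 1)
    rw [Finset.sum_range_succ'] at h1
    simp only [chainAvg_zero] at h1 hstep0
    refine h1.trans ?_
    refine (add_le_add (Finset.sum_le_sum fun k _ => hstepk k) hstep0).trans ?_
    rw [Finset.sum_add_distrib, ← Finset.mul_sum]
    have h2 : ∑ k ∈ Finset.range n, s ^ 3 * (1 + 1 / (α * ((k + 1 : ℕ) : ℝ)))
        ≤ s * ((4 + 2 / c) * ℓ) := by
      rw [hs3]
      simp_rw [mul_assoc s]
      rw [← Finset.mul_sum]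
      gcongr
    have h3 : ∑ k ∈ Finset.range n, W * s ^ 3 ≤ W * (s * ((1 / c + 1) * ℓ)) := by
      rw [Finset.sum_const, Finset.card_range, nsmul_eq_mul, hs3]
      calc (n : ℝ) * (W * (s * α)) = W * (s * (n * α)) := by ring
        _ ≤ _ := by gcongr
    have h4 : W * s ^ 3 ≤ W * (s * ℓ) := by
      rw [hs3]
      gcongr
      linarith
    have h5 : 2 * (s * (1 + m)) ≤ 2 * (1 + m) * (s * ℓ) := by
      calc 2 * (s * (1 + m)) = 2 * (1 + m) * (s * 1) := by ring
        _ ≤ _ := by gcongr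
    have h6 := mul_le_mul_of_nonneg_left h2 hH0
    calc _ ≤ H * (s * ((4 + 2 / c) * ℓ)) + W * (s * ((1 / c + 1) * ℓ))
          + (2 * (1 + m) * (s * ℓ) + W * (s * ℓ)) := by linarith
      _ = _ := by ring
  -- `chainAvg (n + 1)` is `K√α`-Lipschitz and has the same `N(0, Σ_Y)`-integral as `h`, hence is
  -- within `O(√α)` of that integral under any law with bounded first moment
  have hlast : |∫ y, chainAvg J SY α h (n + 1) y ∂π - ∫ y, h y ∂(gauss SY)|
      ≤ K * ((1 + A) + G) * (s * ℓ) := by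
    have hKs : ((K * s).toNNReal : ℝ) = K * s := Real.coe_toNNReal _ (by positivity)
    have hcon : ∀ v, ‖toEuclideanCLM (𝕜 := ℝ) (stepMat J α ^ (n + 1)) v‖
        ≤ ((K * s).toNNReal : ℝ) * ‖v‖ := by
      intro v
      rw [hKs]
      refine le_of_sq_le_sq ((hBk _ v).trans ?_) (by positivity)
      rw [mul_pow, mul_pow, hs2]
      gcongr
      calc (1 - c * α) ^ (n + 1) ≤ (1 - c * α) ^ n :=
            pow_le_pow_of_le_one (by linarith) (by nlinarith) (by omega)
        _ ≤ Real.exp (-(c * α)) ^ n := by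
            have := Real.add_one_le_exp (-(c * α))
            have h0 : 0 ≤ 1 - c * α := by linarith
            gcongr
            linarith
        _ = Real.exp (-(c * α * n)) := by rw [← Real.exp_nat_mul]; congr 1; ring
        _ ≤ α := hn2
    have hlip := chainAvg_lipschitz (SY := SY) hh hcon
    have b1 := lipschitz_integral_sub hπ1 hlip
    have b2 := lipschitz_integral_sub (integrable_norm_gauss SY) hlip
    rw [chainAvg_invariant hSY.posSemidef (hCk _) hh] at b2
    rw [hKs] at b1 b2
    have b3 : K * s * ∫ y, ‖y‖ ∂π ≤ K * s * (1 + A) := by gcongr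
    have b4 : K * ((1 + A) + G) * (s * 1) ≤ K * ((1 + A) + G) * (s * ℓ) := by gcongr
    have b5 : |∫ y, chainAvg J SY α h (n + 1) y ∂π - ∫ y, h y ∂(gauss SY)|
        ≤ K * s * (1 + A) + K * s * G := by
      rw [abs_le] at *
      constructor <;> linarith [b1.1, b1.2, b2.1, b2.2]
    linarith
  rw [Real.dist_eq] at htel
  rw [add_mul]
  exact (abs_sub_le _ (∫ y, chainAvg J SY α h (n + 1) y ∂π) _).trans (add_le_add htel hlast)

end Assembly

/-! ### Rescaling around the root -/

section Scaling

variable {d : ℕ}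

/-- In the rescaled variable `y = (x - x*) / √α` the update reads
`y ↦ (1 + αJ) y + r(y) + √α ξ`. -/
lemma map_scaled {F : EuclideanSpace ℝ (Fin d) → EuclideanSpace ℝ (Fin d)} (hF : Continuous F)
    (xstar : EuclideanSpace ℝ (Fin d)) (J : Matrix (Fin d) (Fin d) ℝ)
    {μ ν : Measure (EuclideanSpace ℝ (Fin d))} [IsProbabilityMeasure μ] [IsProbabilityMeasure ν]
    {α : ℝ} (hα : 0 < α)
    (hinv : (μ.prod ν).map (fun p => p.1 + α • (F p.1 + p.2)) = μ) :
    ((μ.map (fun x => (√α)⁻¹ • (x - xstar))).prod (ν.map (fun ξ => √α • ξ))).map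
      (fun p => toEuclideanCLM (𝕜 := ℝ) (stepMat J α) p.1
        + √α • (F (xstar + √α • p.1) - toEuclideanCLM (𝕜 := ℝ) J (√α • p.1)) + p.2)
      = μ.map (fun x => (√α)⁻¹ • (x - xstar)) := by
  have hs : √α ≠ 0 := (Real.sqrt_pos.2 hα).ne'
  have hFm := hF.measurable
  conv_rhs => rw [← hinv]
  rw [Measure.map_prod_map _ _ (by fun_prop) (by fun_prop), Measure.map_map (by fun_prop)
    (by fun_prop), Measure.map_map (by fun_prop) (by fun_prop)]
  congr 1
  ext1 p
  set y := (√α)⁻¹ • (p.1 - xstar) with hy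
  have hy1 : √α • y = p.1 - xstar := by rw [hy, smul_smul, mul_inv_cancel₀ hs, one_smul]
  have h1 : (√α)⁻¹ • (α • (F p.1 + p.2)) = √α • (F p.1 + p.2) := by
    rw [smul_smul, inv_mul_eq_iff_eq_mul₀ hs |>.2 (Real.mul_self_sqrt hα.le).symm]
  have h2 : √α • √α • toEuclideanCLM (𝕜 := ℝ) J y = α • toEuclideanCLM (𝕜 := ℝ) J y := by
    rw [smul_smul, Real.mul_self_sqrt hα.le]
  have h3 : (√α)⁻¹ • (p.1 + α • (F p.1 + p.2) - xstar) = y + √α • (F p.1 + p.2) := by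
    rw [← h1, hy, ← smul_add]
    congr 1
    abel
  simp only [Function.comp_apply, Prod.map_fst, Prod.map_snd]
  rw [h3, ← hy, hy1, add_sub_cancel, ← hy1]
  simp only [stepMat, map_add, map_one, map_smul, _root_.add_apply, _root_.smul_apply,
    one_apply_eq_self, smul_sub, smul_add, h2]
  abel

lemma eq_gauss {SY : Matrix (Fin d) (Fin d) ℝ} (hSY : SY.PosSemidef)
    {γ : Measure (EuclideanSpace ℝ (Fin d))} [IsProbabilityMeasure γ]
    (hγ : ∀ t : EuclideanSpace ℝ (Fin d),
      (∫ x, Complex.exp (Complex.I * ((⟪t, x⟫ : ℝ) : ℂ)) ∂γ)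
        = Complex.exp (-(1/2 : ℂ) * ((⟪t, toEuclideanCLM (𝕜 := ℝ) SY t⟫ : ℝ) : ℂ))) :
    γ = gauss SY := by
  apply Measure.ext_of_charFun
  ext t
  rw [charFun_gauss hSY, charFun_apply]
  have : ∀ x : EuclideanSpace ℝ (Fin d), Complex.exp ((⟪x, t⟫ : ℝ) * Complex.I)
      = Complex.exp (Complex.I * ((⟪t, x⟫ : ℝ) : ℂ)) := fun x => by
    rw [real_inner_comm, mul_comm]
  simp_rw [this]
  rw [hγ]
  congr 1
  ring

lemma moments_scaled {ν : Measure (EuclideanSpace ℝ (Fin d))} [IsProbabilityMeasure ν]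
    {S : Matrix (Fin d) (Fin d) ℝ} (hmean : (∫ x, x ∂ν) = 0)
    (hcov : ∀ i j, (∫ x, x i * x j ∂ν) = S i j) (hm3 : Integrable (fun x => ‖x‖ ^ 3) ν)
    {α : ℝ} (hα : 0 < α) :
    Integrable (fun y => ‖y‖ ^ 3) (ν.map (fun ξ => √α • ξ)) ∧
    ∫ y, ‖y‖ ^ 3 ∂(ν.map (fun ξ => √α • ξ)) ≤ (∫ y, ‖y‖ ^ 3 ∂ν) * √α ^ 3 ∧
    ∫ x, x ∂(ν.map (fun ξ => √α • ξ)) = 0 ∧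
    ∀ i j, ∫ x, x i * x j ∂(ν.map (fun ξ => √α • ξ)) = (α • S) i j := by
  have hm : AEMeasurable (fun ξ : EuclideanSpace ℝ (Fin d) => √α • ξ) ν := by fun_prop
  refine ⟨?_, le_of_eq ?_, ?_, fun i j => ?_⟩
  · rw [integrable_map_measure (Continuous.aestronglyMeasurable (by fun_prop)) hm]
    refine (hm3.const_mul (√α ^ 3)).congr (Filter.Eventually.of_forall fun x => ?_)
    simp [norm_smul, mul_pow, abs_of_nonneg (Real.sqrt_nonneg α)]
  · rw [integral_map hm (Continuous.aestronglyMeasurable (by fun_prop)), mul_comm,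
      ← integral_const_mul]
    refine integral_congr_ae (Filter.Eventually.of_forall fun x => ?_)
    simp [norm_smul, mul_pow, abs_of_nonneg (Real.sqrt_nonneg α)]
  · rw [integral_map hm (Continuous.aestronglyMeasurable (by fun_prop)), integral_smul, hmean,
      smul_zero]
  · rw [integral_map hm (Continuous.aestronglyMeasurable (by fun_prop)), Matrix.smul_apply,
      ← hcov i j, smul_eq_mul, ← integral_const_mul]
    refine integral_congr_ae (Filter.Eventually.of_forall fun x => ?_)
    have : √α * √α = α := Real.mul_self_sqrt hα.le
    simp only [PiLp.smul_apply, smul_eq_mul]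
    linear_combination (x i * x j) * this

lemma moment_of_lintegral {π : Measure (EuclideanSpace ℝ (Fin d))} {A : ℝ} (hA : 0 ≤ A)
    (h : ∫⁻ y, ENNReal.ofReal (‖y‖ ^ 3) ∂π ≤ ENNReal.ofReal A) :
    Integrable (fun y => ‖y‖ ^ 3) π ∧ ∫ y, ‖y‖ ^ 3 ∂π ≤ A := by
  have hnn : 0 ≤ᵐ[π] fun y : EuclideanSpace ℝ (Fin d) => ‖y‖ ^ 3 :=
    Filter.Eventually.of_forall fun y => by positivity
  have hm : AEStronglyMeasurable (fun y : EuclideanSpace ℝ (Fin d) => ‖y‖ ^ 3) π := by fun_prop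
  refine ⟨⟨hm, ?_⟩, ?_⟩
  · rw [hasFiniteIntegral_iff_ofReal hnn]
    exact h.trans_lt ENNReal.ofReal_lt_top
  · rw [integral_eq_lintegral_of_nonneg_ae hnn hm]
    exact ENNReal.toReal_le_of_le_ofReal hA h

end Scaling

end StochApprox

/-- general-purpose i.i.d. Gaussian approximation theorem.
Under drift regularity (unique root, global Lipschitz, bounded second partials, Hurwitz
Jacobian), i.i.d. noise with mean zero, positive definite covariance `Σ` and finite third
moment, and a family of invariant laws for the constant-stepsize SA update whose
centered-scaled versions have uniformly bounded third moments, the Wasserstein-1 distance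
(in dual form, over 1-Lipschitz test functions) between the centered-scaled stationary law
and the Gaussian law `N(0, Σ_Y)` is at most `U √α log(1/α)` for all small `α`. -/
theorem stmt14 {d : ℕ} (hd : 1 ≤ d)
    (F : EuclideanSpace ℝ (Fin d) → EuclideanSpace ℝ (Fin d))
    (L M : ℝ) (xstar : EuclideanSpace ℝ (Fin d))
    (hF : ContDiff ℝ 2 F)
    (hroot : F xstar = 0) (hrootuniq : ∀ x, F x = 0 → x = xstar)
    (hLip : ∀ x y, ‖F x - F y‖ ≤ L * ‖x - y‖)
    (hM : ∀ x : EuclideanSpace ℝ (Fin d), ∀ i j k : Fin d,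
      |iteratedFDeriv ℝ 2 (fun y => F y i) x
        ![EuclideanSpace.single j 1, EuclideanSpace.single k 1]| ≤ M)
    (Jstar : Matrix (Fin d) (Fin d) ℝ)
    (hJstar : ∀ v, fderiv ℝ F xstar v = Matrix.toEuclideanLin Jstar v)
    (hHurwitz : ∀ z ∈ spectrum ℂ (Jstar.map Complex.ofReal), z.re < 0)
    (ν : Measure (EuclideanSpace ℝ (Fin d))) [IsProbabilityMeasure ν]
    (S : Matrix (Fin d) (Fin d) ℝ) (hS : S.PosDef)
    (hmean : (∫ x, x ∂ν) = 0)
    (hcov : ∀ i j, (∫ x, x i * x j ∂ν) = S i j)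
    (hm3 : Integrable (fun x => ‖x‖ ^ 3) ν)
    (SY : Matrix (Fin d) (Fin d) ℝ) (hSY : SY.PosDef)
    (hLyap : Jstar * SY + SY * Jstarᵀ = -S)
    (γ : Measure (EuclideanSpace ℝ (Fin d))) [IsProbabilityMeasure γ]
    (hγ : ∀ t : EuclideanSpace ℝ (Fin d),
      (∫ x, Complex.exp (Complex.I * ((⟪t, x⟫ : ℝ) : ℂ)) ∂γ)
        = Complex.exp (-(1/2 : ℂ) * ((⟪t, Matrix.toEuclideanLin SY t⟫ : ℝ) : ℂ)))
    (α₀ A : ℝ) (hα₀ : α₀ ∈ Set.Ioc (0:ℝ) 1) (hA : 0 ≤ A)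
    (μα : ℝ → Measure (EuclideanSpace ℝ (Fin d)))
    (hprob : ∀ α ∈ Set.Ioo (0:ℝ) α₀, IsProbabilityMeasure (μα α))
    (hinv : ∀ α ∈ Set.Ioo (0:ℝ) α₀,
      Measure.map (fun p : EuclideanSpace ℝ (Fin d) × EuclideanSpace ℝ (Fin d) =>
        p.1 + α • (F p.1 + p.2)) ((μα α).prod ν) = μα α)
    (hmom : ∀ α ∈ Set.Ioo (0:ℝ) α₀,
      (∫⁻ y, ENNReal.ofReal (‖y‖ ^ 3)
          ∂(Measure.map (fun x => (Real.sqrt α)⁻¹ • (x - xstar)) (μα α)))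
        ≤ ENNReal.ofReal A) :
    ∃ α₁ ∈ Set.Ioc (0:ℝ) 1, ∃ U : ℝ, ∀ α ∈ Set.Ioo (0:ℝ) α₁,
      ∀ h : EuclideanSpace ℝ (Fin d) → ℝ, LipschitzWith 1 h →
        |(∫ y, h y ∂(Measure.map (fun x => (Real.sqrt α)⁻¹ • (x - xstar)) (μα α)))
            - ∫ y, h y ∂γ|
          ≤ U * (Real.sqrt α * Real.log (1/α)) := by
  
  obtain ⟨a, ⟨ha0, ha1⟩, U, hU⟩ := StochApprox.invariant_law_bound hS hSY hLyap hA
    (m₁ := ∫ x, ‖x‖ ^ 3 ∂ν) (R := (d : ℝ) ^ 3 * |M|)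
    (integral_nonneg fun x => by positivity) (by positivity)
  have hγ' : γ = StochApprox.gauss SY := StochApprox.eq_gauss hSY.posSemidef hγ
  refine ⟨min a α₀, ⟨lt_min ha0 hα₀.1, (min_le_left _ _).trans ha1⟩, U, ?_⟩
  rintro α ⟨hα0, hα⟩ h hh
  have hαa : α ∈ Set.Ioo (0 : ℝ) a := ⟨hα0, hα.trans_le (min_le_left _ _)⟩
  have hα' : α ∈ Set.Ioo (0 : ℝ) α₀ := ⟨hα0, hα.trans_le (min_le_right _ _)⟩
  have := hprob α hα'
  obtain ⟨h1, h2, h3, h4⟩ := StochApprox.moments_scaled hmean hcov hm3 hα0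
  obtain ⟨h5, h6⟩ := StochApprox.moment_of_lintegral hA (hmom α hα')
  have p1 : IsProbabilityMeasure (Measure.map (fun x => (Real.sqrt α)⁻¹ • (x - xstar)) (μα α)) :=
    Measure.isProbabilityMeasure_map (by fun_prop)
  have p2 : IsProbabilityMeasure (Measure.map (fun ξ => Real.sqrt α • ξ) ν) :=
    Measure.isProbabilityMeasure_map (by fun_prop)
  have hFm := hF.continuous.measurable
  rw [hγ']
  refine hU α hαa _ _ (fun y => Real.sqrt α • (F (xstar + Real.sqrt α • y)
    - toEuclideanCLM (𝕜 := ℝ) Jstar (Real.sqrt α • y))) h5 h6 h1 h2 h3 h4 (by fun_prop)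
    (fun y => ?_) (StochApprox.map_scaled hF.continuous xstar Jstar hα0 (hinv α hα')) h hh
  have ht := StochApprox.drift_taylor hF hroot hM hJstar (Real.sqrt α • y)
  rw [norm_smul, Real.norm_of_nonneg (Real.sqrt_nonneg α)]
  rw [norm_smul (Real.sqrt α) y, Real.norm_of_nonneg (Real.sqrt_nonneg α)] at ht
  calc _ ≤ Real.sqrt α * ((d : ℝ) ^ 3 * |M| * (Real.sqrt α * ‖y‖) ^ 2) := by gcongr
    _ = _ := by ring
end
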